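/- Every normalized block sequence (x_n) of (e_i) has a subsequence (y_n) such that (y_n), (y_{2n})_{n∈ℕ} and (y_{2n+1})_{n∈ℕ} are mutually equivalent; consequently the closed linear span Y of (y_n) in S is isomorphic (linearly homeomorphic) to its square Y × Y (with the maximum norm). -/

import Mathlib

abbrev c00 : Type := ℕ →₀ ℝ

noncomputable def flog (x : ℝ) : ℝ := Real.logb 2 (x + 1)

noncomputable def supNorm (x : c00) : ℝ := ⨆ i, |x i|

def proj (E : Finset ℕ) (x : c00) : c00 := x.filter (· ∈ E)

def FLt (A B : Finset ℕ) : Prop := ∀ a ∈ A, ∀ b ∈ B, a < b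

def IsNormC00 (N : c00 → ℝ) : Prop :=
  (∀ x, N x = 0 ↔ x = 0) ∧ (∀ x y, N (x + y) ≤ N x + N y) ∧
    ∀ (a : ℝ) (x : c00), N (a • x) = |a| * N x

def schSet (N : c00 → ℝ) (x : c00) : Set ℝ :=
  {s | ∃ n : ℕ, 2 ≤ n ∧ ∃ E : Fin n → Finset ℕ,
    (∀ i j : Fin n, i < j → FLt (E i) (E j)) ∧
    s = (flog n)⁻¹ * ∑ i, N (proj (E i) x)}

def IsSchlumprechtNorm (N : c00 → ℝ) : Prop :=
  IsNormC00 N ∧ ∀ x : c00, IsLUB (insert (supNorm x) (schSet N x)) (N x)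

def IsBlockSeq (x : ℕ → c00) : Prop :=
  (∀ n, x n ≠ 0) ∧ ∀ n, ∀ i ∈ (x n).support, ∀ j ∈ (x (n+1)).support, i < j

def SeqEquiv (N : c00 → ℝ) (u v : ℕ → c00) : Prop :=
  ∃ c : ℝ, 1 ≤ c ∧ ∀ a : ℕ →₀ ℝ,
    (1 / c) * N (a.sum fun i t => t • u i) ≤ N (a.sum fun i t => t • v i) ∧
    N (a.sum fun i t => t • v i) ≤ c * N (a.sum fun i t => t • u i)


/-! ### Part 1: basics -/

theorem flog_mono {a b : ℝ} (ha : 0 ≤ a) (hab : a ≤ b) : flog a ≤ flog b := by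
  unfold flog
  exact Real.logb_le_logb_of_le (by norm_num) (by linarith) (by linarith)

theorem flog_nat_mono {a b : ℕ} (hab : a ≤ b) : flog a ≤ flog b :=
  flog_mono (Nat.cast_nonneg a) (by exact_mod_cast hab)

theorem flog_one : flog 1 = 1 := by
  unfold flog
  norm_num

theorem flog_two : 3 / 2 ≤ flog 2 := by
  unfold flog
  rw [Real.le_logb_iff_rpow_le (by norm_num) (by norm_num)]
  have h : ((2 : ℝ) ^ (3 / 2 : ℝ)) ^ 2 = 8 := by
    rw [← Real.rpow_natCast, ← Real.rpow_mul (by norm_num)]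
    norm_num
  have h0 : (0 : ℝ) ≤ (2 : ℝ) ^ (3 / 2 : ℝ) := by positivity
  nlinarith

theorem flog_nonneg (n : ℕ) : 0 ≤ flog n := by
  unfold flog
  apply Real.logb_nonneg (by norm_num)
  have : (0 : ℝ) ≤ n := Nat.cast_nonneg n
  linarith

theorem flog_ge {n : ℕ} (hn : 2 ≤ n) : 3 / 2 ≤ flog n := by
  have := flog_nat_mono hn
  have h2 := flog_two
  push_cast at this
  linarith

theorem flog_pos {n : ℕ} (hn : 2 ≤ n) : 0 < flog n := by
  linarith [flog_ge hn]

theorem flog_mul (a b : ℕ) : flog ((a * b : ℕ) : ℝ) ≤ flog a + flog b := by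
  unfold flog
  have ha : (0 : ℝ) ≤ a := Nat.cast_nonneg a
  have hb : (0 : ℝ) ≤ b := Nat.cast_nonneg b
  rw [← Real.logb_mul (by linarith) (by linarith)]
  apply Real.logb_le_logb_of_le (by norm_num)
  · positivity
  · push_cast
    nlinarith

theorem flog_pow (a k : ℕ) : flog ((a ^ k : ℕ) : ℝ) ≤ 1 + k * flog a := by
  induction k with
  | zero => simp [flog_one]
  | succ k ih =>
    have := flog_mul (a ^ k) a
    rw [pow_succ]
    push_cast at *
    linarith

theorem flog_tendsto : Filter.Tendsto (fun n : ℕ => flog n) Filter.atTop Filter.atTop := by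
  unfold flog
  apply (Real.tendsto_logb_atTop (by norm_num)).comp
  exact Filter.tendsto_atTop_add_const_right _ _ tendsto_natCast_atTop_atTop

theorem flog_le_four {m l : ℕ} (h : flog m ≤ 4 * flog l) : m ≤ (l + 1) ^ 4 := by
  unfold flog at h
  have hm : (0 : ℝ) ≤ m := Nat.cast_nonneg m
  have hl : (0 : ℝ) ≤ l := Nat.cast_nonneg l
  have h4 : 4 * Real.logb 2 ((l : ℝ) + 1) = Real.logb 2 (((l : ℝ) + 1) ^ 4) := by
    rw [Real.logb_pow]
    norm_num
  rw [h4, Real.logb_le_logb (by norm_num) (by linarith) (by positivity)] at h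
  have : ((m + 1 : ℕ) : ℝ) ≤ (((l + 1) ^ 4 : ℕ) : ℝ) := by push_cast; exact h
  have := Nat.cast_le.mp this
  omega

/-- successive families -/
def FSucc {n : ℕ} (E : Fin n → Finset ℕ) : Prop := ∀ i j : Fin n, i < j → FLt (E i) (E j)

theorem proj_apply (E : Finset ℕ) (x : c00) (k : ℕ) :
    proj E x k = if k ∈ E then x k else 0 := by
  unfold proj
  exact Finsupp.filter_apply _ _ _

theorem proj_add (E : Finset ℕ) (x y : c00) : proj E (x + y) = proj E x + proj E y := by
  ext k
  simp only [proj_apply, Finsupp.add_apply]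
  split_ifs <;> simp

theorem proj_smul (E : Finset ℕ) (t : ℝ) (x : c00) : proj E (t • x) = t • proj E x := by
  ext k
  simp only [proj_apply, Finsupp.smul_apply]
  split_ifs <;> simp

theorem proj_zero (E : Finset ℕ) : proj E 0 = 0 := by
  ext k
  simp [proj_apply]

theorem proj_sum {ι : Type*} (E : Finset ℕ) (s : Finset ι) (g : ι → c00) :
    proj E (∑ i ∈ s, g i) = ∑ i ∈ s, proj E (g i) := by
  classical
  induction s using Finset.induction_on with
  | empty => simp [proj_zero]
  | insert a s ha ih => rw [Finset.sum_insert ha, Finset.sum_insert ha, proj_add, ih]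

theorem proj_proj (E F : Finset ℕ) (x : c00) : proj E (proj F x) = proj (E ∩ F) x := by
  ext k
  simp only [proj_apply, Finset.mem_inter]
  split_ifs <;> simp_all

theorem proj_proj_of_subset {E F : Finset ℕ} (h : E ⊆ F) (x : c00) :
    proj E (proj F x) = proj E x := by
  rw [proj_proj, Finset.inter_eq_left.mpr h]

theorem proj_empty (x : c00) : proj ∅ x = 0 := by
  ext k
  simp [proj_apply]

theorem proj_eq_self {E : Finset ℕ} {x : c00} (h : x.support ⊆ E) : proj E x = x := by
  ext k
  rw [proj_apply]
  split_ifs with hk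
  · rfl
  · by_contra h0
    exact hk (h (Finsupp.mem_support_iff.mpr (Ne.symm h0)))

theorem proj_eq_zero {E : Finset ℕ} {x : c00} (h : Disjoint E x.support) : proj E x = 0 := by
  ext k
  rw [proj_apply]
  split_ifs with hk
  · by_contra h0
    exact (Finset.disjoint_left.mp h hk) (Finsupp.mem_support_iff.mpr h0)
  · rfl

theorem proj_inter_support (E : Finset ℕ) (x : c00) : proj (E ∩ x.support) x = proj E x := by
  rw [← proj_proj, proj_eq_self (subset_refl _)]

section norm

variable {N : c00 → ℝ} (hN : IsSchlumprechtNorm N)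
include hN

theorem N_zero : N 0 = 0 := (hN.1.1 0).2 rfl

theorem N_add (x y : c00) : N (x + y) ≤ N x + N y := hN.1.2.1 x y

theorem N_smul (t : ℝ) (x : c00) : N (t • x) = |t| * N x := hN.1.2.2 t x

theorem N_nonneg (x : c00) : 0 ≤ N x := by
  have h1 := N_add hN x (-x)
  have h2 := N_smul hN (-1) x
  have h3 := N_zero hN
  simp at h1 h2
  linarith

theorem N_sum {ι : Type*} (s : Finset ι) (g : ι → c00) :
    N (∑ i ∈ s, g i) ≤ ∑ i ∈ s, N (g i) := by
  classical
  induction s using Finset.induction_on with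
  | empty => simp [N_zero hN]
  | insert a s ha ih =>
    rw [Finset.sum_insert ha, Finset.sum_insert ha]
    linarith [N_add hN (g a) (∑ i ∈ s, g i)]

theorem supNorm_le (x : c00) : supNorm x ≤ N x := (hN.2 x).1 (Set.mem_insert _ _)

omit hN in
theorem abs_le_supNorm (x : c00) (k : ℕ) : |x k| ≤ supNorm x := by
  unfold supNorm
  apply le_ciSup (f := fun i => |x i|)
  have : (Set.range fun i => |x i|) ⊆ insert 0 ((fun i => |x i|) '' (x.support : Set ℕ)) := by
    rintro _ ⟨i, rfl⟩
    by_cases h : x i = 0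
    · left
      simp [h]
    · right
      exact ⟨i, by simpa using h, rfl⟩
  exact ((Set.Finite.insert 0 (x.support.finite_toSet.image _)).subset this).bddAbove

theorem sum_le_N (x : c00) {n : ℕ} (hn : 2 ≤ n) (E : Fin n → Finset ℕ) (hE : FSucc E) :
    ∑ i, N (proj (E i) x) ≤ flog n * N x := by
  have h := (hN.2 x).1 (Set.mem_insert_of_mem _ ⟨n, hn, E, hE, rfl⟩)
  have hp := flog_pos hn
  rwa [inv_mul_le_iff₀ hp] at h

theorem N_proj_le (E : Finset ℕ) (x : c00) : N (proj E x) ≤ N x := by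
  apply (hN.2 (proj E x)).2
  rintro s (rfl | ⟨n, hn, F, hF, rfl⟩)
  · apply le_trans _ (supNorm_le hN x)
    unfold supNorm
    apply ciSup_le
    intro i
    refine le_trans ?_ (abs_le_supNorm x i)
    rw [proj_apply]
    split_ifs <;> simp
  · have hp := flog_pos hn
    rw [inv_mul_le_iff₀ hp]
    simp only [proj_proj]
    apply sum_le_N hN x hn (fun i => F i ∩ E)
    intro i j hij a ha b hb
    exact hF i j hij a (Finset.mem_inter.mp ha).1 b (Finset.mem_inter.mp hb).1

theorem N_proj_mono {E F : Finset ℕ} (h : E ⊆ F) (x : c00) : N (proj E x) ≤ N (proj F x) := by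
  rw [← proj_proj_of_subset h]
  exact N_proj_le hN _ _

/-- list version of the lower estimate -/
theorem list_le_N (x : c00) (n : ℕ) (hn : 2 ≤ n) (L : List (Finset ℕ)) (hL : L.Pairwise FLt)
    (hl : L.length ≤ n) : (L.map fun F => N (proj F x)).sum ≤ flog n * N x := by
  set E : Fin n → Finset ℕ := fun i => if h : (i : ℕ) < L.length then L[(i : ℕ)] else ∅ with hE
  have hs : FSucc E := by
    intro i j hij
    simp only [hE]
    split_ifs with h1 h2 h2
    · exact List.pairwise_iff_getElem.mp hL _ _ h1 h2 hij
    · intro a _ b hb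
      simp at hb
    · intro a ha
      simp at ha
    · intro a ha
      simp at ha
  refine le_trans (le_of_eq ?_) (sum_le_N hN x hn E hs)
  have h1 : ∑ i, N (proj (E i) x) = ∑ i ∈ Finset.range n,
      (if h : i < L.length then N (proj L[i] x) else 0) := by
    rw [Finset.sum_range]
    apply Finset.sum_congr rfl
    intro i _
    simp only [hE]
    split_ifs with h
    · rfl
    · rw [proj_empty, N_zero hN]
  rw [h1, ← Finset.sum_subset (Finset.range_subset_range.mpr hl)]
  · rw [Finset.sum_range, ← List.sum_ofFn]
    congr 1
    apply List.ext_getElem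
    · simp
    · intro i h1 h2
      simp at h1
      simp [h1]
  · intro i _ hi
    simp at hi
    rw [dif_neg (by omega)]

theorem N_single_bound (x : c00) (E : Finset ℕ) : N (proj E x) ≤ ∑ k ∈ E, N (proj {k} x) := by
  have : proj E x = ∑ k ∈ E, proj {k} x := by
    ext k
    rw [Finsupp.finsetSum_apply]
    simp only [proj_apply, Finset.mem_singleton]
    rw [Finset.sum_ite_eq]
  rw [this]
  exact N_sum hN _ _

theorem sum_N_le_l1 (x : c00) {n : ℕ} (E : Fin n → Finset ℕ) (hE : FSucc E) :
    ∑ i, N (proj (E i) x) ≤ ∑ k ∈ x.support, N (proj {k} x) := by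
  have h1 : ∀ i, N (proj (E i) x) ≤ ∑ k ∈ E i ∩ x.support, N (proj {k} x) := by
    intro i
    rw [← proj_inter_support]
    exact N_single_bound hN x _
  refine le_trans (Finset.sum_le_sum fun i _ => h1 i) ?_
  rw [← Finset.sum_biUnion]
  · apply Finset.sum_le_sum_of_subset_of_nonneg
    · intro k hk
      simp only [Finset.mem_biUnion, Finset.mem_inter] at hk
      obtain ⟨_, _, _, h⟩ := hk
      exact h
    · intro k _ _
      exact N_nonneg hN _
  · intro i _ j _ hij
    apply Finset.disjoint_left.mpr
    intro k hk hk'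
    rw [Finset.mem_inter] at hk hk'
    rcases lt_or_gt_of_ne hij with h | h
    · exact lt_irrefl _ (hE i j h k hk.1 k hk'.1)
    · exact lt_irrefl _ (hE j i h k hk'.1 k hk.1)

/-- attainment -/
theorem attain (x : c00) (hx : supNorm x < N x) :
    ∃ n : ℕ, 2 ≤ n ∧ ∃ E : Fin n → Finset ℕ, FSucc E ∧ (∀ i, E i ⊂ x.support) ∧
      N x ≤ (flog n)⁻¹ * ∑ i, N (proj (E i) x) := by
  classical
  have hpos : 0 < N x := by
    refine lt_of_le_of_lt ?_ hx
    exact le_trans (abs_nonneg (x 0)) (abs_le_supNorm x 0)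
  set l1 := ∑ k ∈ x.support, N (proj {k} x) with hl1
  obtain ⟨n0, hn0⟩ := Filter.eventually_atTop.mp
    (flog_tendsto.eventually_ge_atTop (2 * l1 / N x))
  -- the finite set of candidates
  set T : Finset ℝ := (Finset.range (n0 + 2)).biUnion fun n =>
    ((Finset.univ : Finset (Fin n → x.support.powerset)).filter
      (fun E => FSucc (fun i => (E i : Finset ℕ)) ∧ 2 ≤ n)).image
      (fun E => (flog n)⁻¹ * ∑ i, N (proj (E i : Finset ℕ) x)) with hT
  have key : ∃ t ∈ T, N x ≤ t := by
    by_contra hcon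
    push Not at hcon
    have hb : ∃ b, b < N x ∧ supNorm x ≤ b ∧ N x / 2 ≤ b ∧ ∀ t ∈ T, t ≤ b := by
      set T' : Finset ℝ := insert (supNorm x) (insert (N x / 2) T)
      have hne : T'.Nonempty := ⟨_, Finset.mem_insert_self _ _⟩
      refine ⟨T'.max' hne, ?_, ?_, ?_, ?_⟩
      · rw [Finset.max'_lt_iff]
        intro y hy
        simp only [T', Finset.mem_insert] at hy
        rcases hy with rfl | rfl | hy
        · exact hx
        · linarith
        · exact hcon y hy
      · exact Finset.le_max' _ _ (by simp [T'])
      · exact Finset.le_max' _ _ (by simp [T'])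
      · intro t ht
        exact Finset.le_max' _ _ (by simp [T', ht])
    obtain ⟨b, hb1, hb2, hb3, hb4⟩ := hb
    have : N x ≤ b := by
      apply (hN.2 x).2
      rintro s (rfl | ⟨n, hn, E, hE, rfl⟩)
      · exact hb2
      · by_cases hnn : n < n0 + 2
        · apply hb4
          rw [hT, Finset.mem_biUnion]
          refine ⟨n, Finset.mem_range.mpr hnn, ?_⟩
          rw [Finset.mem_image]
          refine ⟨fun i => ⟨E i ∩ x.support, by simp⟩, ?_, ?_⟩
          · simp only [Finset.mem_filter, Finset.mem_univ, true_and]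
            refine ⟨?_, hn⟩
            intro i j hij a ha b hb
            exact hE i j hij a (Finset.mem_inter.mp ha).1 b (Finset.mem_inter.mp hb).1
          · simp only [proj_inter_support]
        · refine le_trans ?_ hb3
          have h1 := hn0 n (by omega)
          have h2 := sum_N_le_l1 hN x E hE
          have hp := flog_pos hn
          rw [inv_mul_le_iff₀ hp]
          rw [div_le_iff₀ hpos] at h1
          linarith
    linarith
  obtain ⟨t, ht, hNt⟩ := key
  rw [hT, Finset.mem_biUnion] at ht
  obtain ⟨n, _, ht⟩ := ht
  rw [Finset.mem_image] at ht
  obtain ⟨E, hE, rfl⟩ := ht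
  simp only [Finset.mem_filter, Finset.mem_univ, true_and] at hE
  obtain ⟨hE, hn⟩ := hE
  refine ⟨n, hn, fun i => (E i : Finset ℕ), hE, ?_, hNt⟩
  intro i
  have hsub : (E i : Finset ℕ) ⊆ x.support := Finset.mem_powerset.mp (E i).2
  refine lt_of_le_of_ne hsub ?_
  intro heq
  have heq : (E i : Finset ℕ) = x.support := heq
  have hother : ∀ j, j ≠ i → (E j : Finset ℕ) = ∅ := by
    intro j hj
    have hsubj : (E j : Finset ℕ) ⊆ x.support := Finset.mem_powerset.mp (E j).2
    by_contra hne
    obtain ⟨k, hk⟩ := Finset.nonempty_iff_ne_empty.mpr hne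
    have hki : k ∈ (E i : Finset ℕ) := by rw [heq]; exact hsubj hk
    rcases lt_or_gt_of_ne hj with h | h
    · exact lt_irrefl _ (hE j i h k hk k hki)
    · exact lt_irrefl _ (hE i j h k hki k hk)
  have hsum : ∑ j, N (proj (E j : Finset ℕ) x) = N x := by
    rw [Finset.sum_eq_single i]
    · rw [heq, proj_eq_self (subset_refl _)]
    · intro j _ hj
      rw [hother j hj, proj_empty, N_zero hN]
    · simp
  rw [hsum] at hNt
  have hp := flog_ge hn
  rw [le_inv_mul_iff₀ (by linarith)] at hNt
  nlinarith

omit hN in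
theorem exists_abs_eq (x : c00) (hx : x ≠ 0) : ∃ k ∈ x.support, supNorm x ≤ |x k| := by
  have hne : x.support.Nonempty := Finsupp.support_nonempty_iff.mpr hx
  obtain ⟨k, hk, hmax⟩ := Finset.exists_max_image x.support (fun i => |x i|) hne
  refine ⟨k, hk, ?_⟩
  unfold supNorm
  apply ciSup_le
  intro i
  by_cases h : i ∈ x.support
  · exact hmax i h
  · rw [Finsupp.notMem_support_iff.mp h]
    simp

theorem abs_le_N (x : c00) (k : ℕ) : |x k| ≤ N x :=
  (abs_le_supNorm x k).trans (supNorm_le hN x)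

end norm


/-! ### Part 2: configurations -/

abbrev Cfg : Type := List (Finset ℕ × ℝ)

def AdmC (N : c00 → ℝ) (C1 : ℝ) (c : Cfg) : Prop :=
  ∀ (x : c00) (G : Finset ℕ → Finset ℕ),
    (∀ k ∈ c, ∀ k' ∈ c, FLt k.1 k'.1 → FLt (G k.1) (G k'.1)) →
    (c.map fun k => k.2 * N (proj (G k.1) x)).sum ≤ C1 * N x

def blk (p : ℕ → ℕ) (i : ℕ) : Finset ℕ := Finset.Ico (p i) (p (i + 1))

def cnt (p : ℕ → ℕ) (i : ℕ) (c : Cfg) : ℕ :=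
  c.countP (fun k => decide (k.1.Nonempty ∧ k.1 ⊆ blk p i))

def cval (N : c00 → ℝ) (X : c00) (c : Cfg) : ℝ := (c.map fun k => k.2 * N (proj k.1 X)).sum

def InHull (F E : Finset ℕ) : Prop := ∀ x ∈ F, (∃ a ∈ E, a ≤ x) ∧ (∃ b ∈ E, x ≤ b)

structure LGood (N : c00 → ℝ) (C1 : ℝ) (p : ℕ → ℕ) (A E : Finset ℕ) (b : ℕ → ℕ)
    (L : List Cfg) : Prop where
  adm : ∀ c ∈ L, AdmC N C1 c
  pw : L.flatten.Pairwise (fun k k' => FLt k.1 k'.1)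
  nonneg : ∀ k ∈ L.flatten, 0 ≤ k.2
  hull : ∀ k ∈ L.flatten, InHull k.1 E
  blk : ∀ k ∈ L.flatten, ∃ i ∈ A, k.1 ⊆ blk p i
  cnt : ∀ i, cnt p i L.flatten ≤ b i

theorem InHull.of_subset {F E : Finset ℕ} (h : F ⊆ E) : InHull F E :=
  fun x hx => ⟨⟨x, h hx, le_rfl⟩, ⟨x, h hx, le_rfl⟩⟩

theorem InHull.mono {F E E' : Finset ℕ} (h : InHull F E) (hE : E ⊆ E') : InHull F E' := by
  intro x hx
  obtain ⟨⟨a, ha, ha'⟩, ⟨b, hb, hb'⟩⟩ := h x hx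
  exact ⟨⟨a, hE ha, ha'⟩, ⟨b, hE hb, hb'⟩⟩

theorem FLt.of_hull {F F' E E' : Finset ℕ} (h : FLt E E') (hF : InHull F E) (hF' : InHull F' E') :
    FLt F F' := by
  intro x hx y hy
  obtain ⟨_, ⟨b, hb, hb'⟩⟩ := hF x hx
  obtain ⟨⟨a, ha, ha'⟩, _⟩ := hF' y hy
  have := h b hb a ha
  omega

theorem blk_eq {p : ℕ → ℕ} (hp : StrictMono p) {i j x : ℕ} (hi : x ∈ blk p i) (hj : x ∈ blk p j) :
    i = j := by
  unfold blk at *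
  rw [Finset.mem_Ico] at *
  rcases lt_trichotomy i j with h | h | h
  · have := hp.monotone (show i + 1 ≤ j from h)
    omega
  · exact h
  · have := hp.monotone (show j + 1 ≤ i from h)
    omega

theorem blk_lt {p : ℕ → ℕ} (hp : StrictMono p) {i j : ℕ} (hij : i < j) : FLt (blk p i) (blk p j) := by
  intro x hx y hy
  unfold blk at *
  rw [Finset.mem_Ico] at *
  have := hp.monotone (show i + 1 ≤ j from hij)
  omega

theorem FLt.mono {F F' E E' : Finset ℕ} (h : FLt E E') (hF : F ⊆ E) (hF' : F' ⊆ E') :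
    FLt F F' := fun x hx y hy => h x (hF hx) y (hF' hy)

section

variable {N : c00 → ℝ} {C1 : ℝ} {p : ℕ → ℕ} {A E : Finset ℕ} {b : ℕ → ℕ}

theorem LGood.nil : LGood N C1 p A E b [] := by
  constructor <;> simp [_root_.cnt]

theorem LGood.append {b1 b2 : ℕ → ℕ} {L1 L2 : List Cfg} (h1 : LGood N C1 p A E b1 L1)
    (h2 : LGood N C1 p A E b2 L2)
    (h12 : ∀ k ∈ L1.flatten, ∀ k' ∈ L2.flatten, FLt k.1 k'.1)
    (hb : ∀ i, b1 i + b2 i ≤ b i) : LGood N C1 p A E b (L1 ++ L2) := by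
  constructor
  · intro c hc
    rcases List.mem_append.mp hc with hc | hc
    · exact h1.adm c hc
    · exact h2.adm c hc
  · rw [List.flatten_append, List.pairwise_append]
    exact ⟨h1.pw, h2.pw, h12⟩
  · intro k hk
    rw [List.flatten_append, List.mem_append] at hk
    exact hk.elim (h1.nonneg k) (h2.nonneg k)
  · intro k hk
    rw [List.flatten_append, List.mem_append] at hk
    exact hk.elim (h1.hull k) (h2.hull k)
  · intro k hk
    rw [List.flatten_append, List.mem_append] at hk
    exact hk.elim (h1.blk k) (h2.blk k)
  · intro i
    rw [List.flatten_append]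
    have e1 := h1.cnt i
    have e2 := h2.cnt i
    unfold _root_.cnt at *
    rw [List.countP_append]
    exact (Nat.add_le_add e1 e2).trans (hb i)

theorem LGood.mono (hp : StrictMono p) {A' E' : Finset ℕ} {b' : ℕ → ℕ} {L : List Cfg}
    (h : LGood N C1 p A E b L)
    (hA : A ⊆ A') (hE : ∀ k ∈ L.flatten, InHull k.1 E') (hb : ∀ i ∈ A, b i ≤ b' i) :
    LGood N C1 p A' E' b' L := by
  refine ⟨h.adm, h.pw, h.nonneg, hE, ?_, ?_⟩
  · intro k hk
    obtain ⟨i, hi, hi'⟩ := h.blk k hk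
    exact ⟨i, hA hi, hi'⟩
  · intro i
    by_cases hi : i ∈ A
    · exact (h.cnt i).trans (hb i hi)
    · have : _root_.cnt p i L.flatten = 0 := by
        unfold _root_.cnt
        rw [List.countP_eq_zero]
        intro k hk
        simp only [decide_eq_true_eq, not_and]
        intro ⟨x, hx⟩ hsub
        obtain ⟨j, hj, hj'⟩ := h.blk k hk
        have := blk_eq hp (hsub hx) (hj' hx)
        subst this
        exact hi hj
      omega

theorem LGood.mono' (hp : StrictMono p) {A' E' : Finset ℕ} {b' : ℕ → ℕ} {L : List Cfg}
    (h : LGood N C1 p A E b L)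
    (hA : A ⊆ A') (hE : E ⊆ E') (hb : ∀ i ∈ A, b i ≤ b' i) :
    LGood N C1 p A' E' b' L :=
  h.mono hp hA (fun k hk => (h.hull k hk).mono hE) hb

theorem LGood.concat {n : ℕ} {F : Fin n → Finset ℕ} (hF : FSucc F) (hFE : ∀ s, F s ⊆ E)
    {bs : Fin n → ℕ → ℕ} {Ls : Fin n → List Cfg} (h : ∀ s, LGood N C1 p A (F s) (bs s) (Ls s)) :
    LGood N C1 p A E (fun i => ∑ s, bs s i) (List.ofFn Ls).flatten := by
  induction n with
  | zero => simpa using LGood.nil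
  | succ n ih =>
    have ih' := ih (F := fun s => F s.succ) (bs := fun s => bs s.succ) (Ls := fun s => Ls s.succ)
      (fun i j hij => hF _ _ (Fin.succ_lt_succ_iff.mpr hij)) (fun s => hFE _) (fun s => h _)
    rw [List.ofFn_succ, List.flatten_cons]
    have h0 : LGood N C1 p A E (bs 0) (Ls 0) :=
      ⟨(h 0).adm, (h 0).pw, (h 0).nonneg, fun k hk => ((h 0).hull k hk).mono (hFE 0),
        (h 0).blk, (h 0).cnt⟩
    refine h0.append ih' ?_ ?_
    · intro k hk k' hk'
      rw [List.mem_flatten] at hk'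
      obtain ⟨c, hc, hkc⟩ := hk'
      rw [List.mem_flatten] at hc
      obtain ⟨l, hl, hcl⟩ := hc
      rw [List.mem_ofFn] at hl
      obtain ⟨s, rfl⟩ := hl
      refine (hF 0 s.succ (Fin.succ_pos s)).of_hull ((h 0).hull k hk) ((h s.succ).hull k' ?_)
      exact List.mem_flatten.mpr ⟨c, hcl, hkc⟩
    · intro i
      rw [Fin.sum_univ_succ]

theorem LGood.single (hN : IsSchlumprechtNorm N) (hC1 : 1 ≤ C1) (hp : StrictMono p)
    {F : Finset ℕ} (hF : InHull F E) {i : ℕ}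
    (hi : i ∈ A) (hFi : F ⊆ _root_.blk p i) (hb : F.Nonempty → 1 ≤ b i) :
    LGood N C1 p A E b [[(F, 1)]] := by
  constructor
  · intro c hc x G _
    simp only [List.mem_singleton] at hc
    subst hc
    simp only [List.map_cons, List.map_nil, List.sum_cons, List.sum_nil, one_mul, add_zero]
    have := N_proj_le hN (G F) x
    nlinarith [N_nonneg hN x]
  · simp
  · simp
  · simpa using hF
  · simpa using ⟨i, hi, hFi⟩
  · intro j
    unfold _root_.cnt
    by_cases hne : F.Nonempty ∧ F ⊆ _root_.blk p j
    · obtain ⟨⟨x, hx⟩, hsub⟩ := hne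
      have := blk_eq hp (hsub hx) (hFi hx)
      subst this
      have hne : F.Nonempty := ⟨x, hx⟩
      simpa [hFi, hne] using hb ⟨x, hx⟩
    · simp [hne]

theorem cval_append (X : c00) (c c' : Cfg) : cval N X (c ++ c') = cval N X c + cval N X c' := by
  simp [cval]

theorem cval_nil (X : c00) : cval N X [] = 0 := by simp [cval]

theorem cval_single (X : c00) (F : Finset ℕ) (w : ℝ) : cval N X [(F, w)] = w * N (proj F X) := by
  simp [cval]

theorem cval_concat (X : c00) {n : ℕ} (Ls : Fin n → List Cfg) :
    cval N X (List.ofFn Ls).flatten.flatten = ∑ s, cval N X (Ls s).flatten := by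
  induction n with
  | zero => simp [cval]
  | succ n ih =>
    rw [List.ofFn_succ, List.flatten_cons, List.flatten_append, cval_append, ih,
      Fin.sum_univ_succ]

theorem cval_nonneg (hN : IsSchlumprechtNorm N) (X : c00) (c : Cfg) (h : ∀ k ∈ c, 0 ≤ k.2) :
    0 ≤ cval N X c := by
  unfold cval
  apply List.sum_nonneg
  intro t ht
  rw [List.mem_map] at ht
  obtain ⟨k, hk, rfl⟩ := ht
  exact mul_nonneg (h k hk) (N_nonneg hN _)

def scaleC (t : ℝ) (c : Cfg) : Cfg := c.map fun k => (k.1, t * k.2)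

theorem cval_scale (X : c00) (t : ℝ) (c : Cfg) : cval N X (scaleC t c) = t * cval N X c := by
  unfold cval scaleC
  rw [List.map_map, ← List.sum_map_mul_left]
  congr 1
  apply List.map_congr_left
  intro k _
  simp [mul_assoc]

theorem LGood.scale (hN : IsSchlumprechtNorm N) (hC1 : 1 ≤ C1) {L : List Cfg}
    (h : LGood N C1 p A E b L)
    {n : ℕ} (hn : 2 ≤ n) (hl : L.length ≤ n) :
    LGood N C1 p A E b [scaleC (flog n)⁻¹ L.flatten] := by
  have hfp := flog_pos hn
  have hmem : ∀ k, k ∈ [scaleC (flog n)⁻¹ L.flatten].flatten →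
      ∃ k' ∈ L.flatten, k.1 = k'.1 ∧ k.2 = (flog n)⁻¹ * k'.2 := by
    intro k hk
    simp only [List.flatten_cons, List.flatten_nil, List.append_nil, scaleC, List.mem_map] at hk
    obtain ⟨k', hk', rfl⟩ := hk
    exact ⟨k', hk', rfl, rfl⟩
  constructor
  · intro c hc x G hG
    simp only [List.mem_singleton] at hc
    subst hc
    classical
    have hG' : ∀ k ∈ L.flatten, ∀ k' ∈ L.flatten, FLt k.1 k'.1 → FLt (G k.1) (G k'.1) := by
      intro k hk k' hk' hlt
      exact hG (k.1, (flog n)⁻¹ * k.2) (List.mem_map.mpr ⟨k, hk, rfl⟩)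
        (k'.1, (flog n)⁻¹ * k'.2) (List.mem_map.mpr ⟨k', hk', rfl⟩) hlt
    set EE : Cfg → Finset ℕ := fun c => c.toFinset.biUnion (fun k => G k.1) with hEE
    have e1 : ((scaleC (flog n)⁻¹ L.flatten).map fun k => k.2 * N (proj (G k.1) x)).sum
        = (flog n)⁻¹ * (L.map fun c => (c.map fun k => k.2 * N (proj (G k.1) x)).sum).sum := by
      unfold scaleC
      rw [List.map_map]
      have : ((fun k : Finset ℕ × ℝ => k.2 * N (proj (G k.1) x)) ∘
          fun k : Finset ℕ × ℝ => (k.1, (flog n)⁻¹ * k.2))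
          = fun k : Finset ℕ × ℝ => (flog n)⁻¹ * (k.2 * N (proj (G k.1) x)) := by
        funext k
        simp [mul_assoc]
      rw [this, List.sum_map_mul_left, List.map_flatten, List.sum_flatten, List.map_map]
      rfl
    rw [e1, inv_mul_le_iff₀ hfp]
    have e2 : (L.map fun c => (c.map fun k => k.2 * N (proj (G k.1) x)).sum).sum
        ≤ (L.map fun c => C1 * N (proj (EE c) x)).sum := by
      apply List.sum_le_sum
      intro c hc
      have := h.adm c hc (proj (EE c) x) G (fun k hk k' hk' =>
        hG' k (List.mem_flatten.mpr ⟨c, hc, hk⟩) k' (List.mem_flatten.mpr ⟨c, hc, hk'⟩))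
      refine le_trans (le_of_eq ?_) this
      congr 1
      apply List.map_congr_left
      intro k hk
      rw [proj_proj_of_subset]
      intro y hy
      simp only [hEE, Finset.mem_biUnion, List.mem_toFinset]
      exact ⟨k, hk, hy⟩
    refine e2.trans ?_
    rw [List.sum_map_mul_left]
    have e3 := list_le_N hN x n hn (L.map EE) ?_ (by simpa using hl)
    · rw [List.map_map] at e3
      have e4 : (L.map fun c => N (proj (EE c) x)).sum ≤ flog n * N x := e3
      nlinarith
    · rw [List.pairwise_map]
      have := (List.pairwise_flatten.mp h.pw).2
      refine List.Pairwise.imp_of_mem ?_ this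
      intro c c' hc hc' hcc y hy y' hy'
      simp only [hEE, Finset.mem_biUnion, List.mem_toFinset] at hy hy'
      obtain ⟨k, hk, hyk⟩ := hy
      obtain ⟨k', hk', hyk'⟩ := hy'
      exact hG' k (List.mem_flatten.mpr ⟨c, hc, hk⟩) k' (List.mem_flatten.mpr ⟨c', hc', hk'⟩)
        (hcc k hk k' hk') y hyk y' hyk'
  · simp only [List.flatten_cons, List.flatten_nil, List.append_nil, scaleC]
    rw [List.pairwise_map]
    exact h.pw
  · intro k hk
    obtain ⟨k', hk', _, e⟩ := hmem k hk
    rw [e]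
    exact mul_nonneg (inv_nonneg.mpr hfp.le) (h.nonneg k' hk')
  · intro k hk
    obtain ⟨k', hk', e, _⟩ := hmem k hk
    rw [e]
    exact h.hull k' hk'
  · intro k hk
    obtain ⟨k', hk', e, _⟩ := hmem k hk
    rw [e]
    exact h.blk k' hk'
  · intro i
    refine le_trans (le_of_eq ?_) (h.cnt i)
    simp only [List.flatten_cons, List.flatten_nil, List.append_nil, scaleC, _root_.cnt]
    rw [List.countP_map]
    rfl

end


/-! ### Part 3: counting functions, the setup, and the step lemma -/

def chi (E : Finset ℕ) (q : ℕ) : ℕ := if (∃ x ∈ E, x < q) ∧ (∃ y ∈ E, q ≤ y) then 1 else 0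

theorem chi_mono {E F : Finset ℕ} (h : E ⊆ F) (q : ℕ) : chi E q ≤ chi F q := by
  unfold chi
  split_ifs with h1 h2
  · exact le_rfl
  · exfalso
    obtain ⟨⟨x, hx, hx'⟩, ⟨y, hy, hy'⟩⟩ := h1
    exact h2 ⟨⟨x, h hx, hx'⟩, ⟨y, h hy, hy'⟩⟩
  · omega
  · omega

theorem chi_le_one (E : Finset ℕ) (q : ℕ) : chi E q ≤ 1 := by
  unfold chi
  split_ifs <;> omega

theorem chi_sum {E : Finset ℕ} {n : ℕ} {F : Fin n → Finset ℕ} (hF : FSucc F) (hFE : ∀ s, F s ⊆ E)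
    (q : ℕ) : ∑ s, chi (F s) q ≤ chi E q := by
  by_cases hE : chi E q = 0
  · rw [hE]
    apply le_of_eq
    apply Finset.sum_eq_zero
    intro s _
    have := chi_mono (hFE s) q
    omega
  · have hE1 : chi E q = 1 := by
      have := chi_le_one E q
      omega
    rw [hE1]
    unfold chi
    rw [← Finset.card_filter, Finset.card_le_one]
    intro s hs t ht
    simp only [Finset.mem_filter, Finset.mem_univ, true_and] at hs ht
    obtain ⟨⟨x, hx, hx'⟩, ⟨y, hy, hy'⟩⟩ := hs
    obtain ⟨⟨z, hz, hz'⟩, ⟨w, hw, hw'⟩⟩ := ht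
    rcases lt_trichotomy s t with h | h | h
    · have := hF s t h y hy z hz
      omega
    · exact h
    · have := hF t s h w hw x hx
      omega

def cc (p : ℕ → ℕ) (i : ℕ) (E : Finset ℕ) : ℕ := chi E (p i) + chi E (p (i + 1))

theorem cc_le_two (p : ℕ → ℕ) (i : ℕ) (E : Finset ℕ) : cc p i E ≤ 2 := by
  have h1 := chi_le_one E (p i)
  have h2 := chi_le_one E (p (i + 1))
  unfold cc
  omega

theorem cc_sum (p : ℕ → ℕ) {E : Finset ℕ} {n : ℕ} {F : Fin n → Finset ℕ} (hF : FSucc F)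
    (hFE : ∀ s, F s ⊆ E) (i : ℕ) : ∑ s, cc p i (F s) ≤ cc p i E := by
  unfold cc
  rw [Finset.sum_add_distrib]
  exact Nat.add_le_add (chi_sum hF hFE _) (chi_sum hF hFE _)

theorem cc_pos {p : ℕ → ℕ} {i : ℕ} {E : Finset ℕ} {x : ℕ} (hx : x ∈ E) (hxi : x ∈ blk p i)
    (hE : ¬ E ⊆ blk p i) : 1 ≤ cc p i E := by
  obtain ⟨y, hy, hyi⟩ := Finset.not_subset.mp hE
  unfold cc
  unfold blk at *
  rw [Finset.mem_Ico] at *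
  by_cases h : y < p i
  · have : chi E (p i) = 1 := by
      unfold chi
      rw [if_pos ⟨⟨y, hy, h⟩, ⟨x, hx, hxi.1⟩⟩]
    omega
  · have : chi E (p (i + 1)) = 1 := by
      unfold chi
      rw [if_pos ⟨⟨x, hx, hxi.2⟩, ⟨y, hy, by omega⟩⟩]
    omega

def bud (p W : ℕ → ℕ) (E : Finset ℕ) (d i : ℕ) : ℕ :=
  cc p i E * (i - d) * W i + (if E ⊆ blk p i ∧ E.Nonempty then 1 else 0)

theorem bud_ge {p W : ℕ → ℕ} {E : Finset ℕ} {d i : ℕ} (hc : 1 ≤ cc p i E) (hd : d < i) :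
    W i ≤ bud p W E d i := by
  unfold bud
  have h1 : 1 ≤ cc p i E * (i - d) := Nat.mul_pos hc (by omega)
  exact (Nat.le_mul_of_pos_left (W i) h1).trans (Nat.le_add_right _ _)

theorem bud_sum {p W : ℕ → ℕ} {E : Finset ℕ} {n : ℕ} {F : Fin n → Finset ℕ} (hF : FSucc F)
    (hFE : ∀ s, F s ⊆ E) {d i : ℕ} (hc : 1 ≤ cc p i E) (hd : d < i) (hn : n ≤ W i) :
    ∑ s, bud p W (F s) (d + 1) i ≤ bud p W E d i := by
  unfold bud
  rw [Finset.sum_add_distrib, ← Finset.sum_mul, ← Finset.sum_mul]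
  have h1 := cc_sum p hF hFE i
  have h2 : ∑ s, (if F s ⊆ blk p i ∧ (F s).Nonempty then 1 else 0) ≤ n := by
    calc ∑ s, (if F s ⊆ blk p i ∧ (F s).Nonempty then 1 else 0) ≤ ∑ s : Fin n, 1 := by
          apply Finset.sum_le_sum
          intro s _
          split_ifs <;> omega
      _ = n := by simp
  obtain ⟨e, he⟩ : ∃ e, i = d + 1 + e := ⟨i - (d + 1), by omega⟩
  have e1 : i - (d + 1) = e := by omega
  have e2 : i - d = e + 1 := by omega
  rw [e1, e2]
  calc (∑ s, cc p i (F s)) * e * W i + _ ≤ cc p i E * e * W i + n := by gcongr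
    _ ≤ cc p i E * e * W i + 1 * W i := by omega
    _ ≤ cc p i E * e * W i + cc p i E * W i := by gcongr
    _ = cc p i E * (e + 1) * W i := by ring
    _ ≤ _ := by omega

def Jbad (N : c00 → ℝ) (u : ℕ → c00) (M : ℕ → ℕ) (l i : ℕ) : Prop :=
  M i ≤ l ∧ ∃ E : Fin l → Finset ℕ, FSucc E ∧ (2 / 3 : ℝ) ^ i * flog l < ∑ s, N (proj (E s) (u i))

structure Setup (N : c00 → ℝ) where
  C1 : ℝ
  hC1 : 1 ≤ C1
  u : ℕ → c00
  p : ℕ → ℕ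
  hp : StrictMono p
  hsupp : ∀ i, (u i).support ⊆ blk p i
  hu : ∀ i, N (u i) ≤ 1
  M : ℕ → ℕ
  W : ℕ → ℕ
  hM : StrictMono M
  hM0 : (208 : ℝ) ^ 2 ≤ flog (M 0)
  hW : ∀ i, M i ^ 4 ≤ W i
  a : ℕ →₀ ℝ
  H3 : ∀ (l : ℕ) (J : Finset ℕ), (∀ i ∈ J, Jbad N u M l i) →
    ∃ (E : Finset ℕ) (c : Cfg), LGood N C1 p J E W [c] ∧
      ∑ i ∈ J, |a i| ≤ cval N (∑ i ∈ a.support, a i • u i) c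

namespace Setup

variable {N : c00 → ℝ} (S : Setup N)

noncomputable def xx (A : Finset ℕ) : c00 := ∑ i ∈ A, S.a i • S.u i

noncomputable def X : c00 := S.xx S.a.support

noncomputable def Loss (E A : Finset ℕ) (d : ℕ) : ℝ :=
  ∑ i ∈ A, (cc S.p i E : ℝ) * (|S.a i| * ((2 / 3 : ℝ) ^ i * (3 / 2 : ℝ) ^ d))

theorem Loss_nonneg (E A : Finset ℕ) (d : ℕ) : 0 ≤ S.Loss E A d := by
  unfold Loss
  exact Finset.sum_nonneg fun i _ => by positivity

theorem Loss_mono (E : Finset ℕ) {A A' : Finset ℕ} (h : A ⊆ A') (d : ℕ) :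
    S.Loss E A d ≤ S.Loss E A' d := by
  unfold Loss
  exact Finset.sum_le_sum_of_subset_of_nonneg h fun i _ _ => by positivity

theorem Loss_union (E : Finset ℕ) {A A' : Finset ℕ} (h : Disjoint A A') (d : ℕ) :
    S.Loss E (A ∪ A') d = S.Loss E A d + S.Loss E A' d := by
  unfold Loss
  exact Finset.sum_union h

theorem Loss_step {E : Finset ℕ} (A : Finset ℕ) {n : ℕ} (hn : 2 ≤ n) {F : Fin n → Finset ℕ}
    (hF : FSucc F) (hFE : ∀ s, F s ⊆ E) (d : ℕ) :
    (flog n)⁻¹ * ∑ s, S.Loss (F s) A (d + 1) ≤ S.Loss E A d := by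
  have hf := flog_ge hn
  rw [inv_mul_le_iff₀ (by linarith)]
  unfold Loss
  rw [Finset.sum_comm, Finset.mul_sum]
  apply Finset.sum_le_sum
  intro i _
  rw [← Finset.sum_mul]
  have h1 : (∑ s, (cc S.p i (F s) : ℝ)) ≤ cc S.p i E := by exact_mod_cast cc_sum S.p hF hFE i
  have h2 : 0 ≤ |S.a i| * ((2 / 3 : ℝ) ^ i * (3 / 2 : ℝ) ^ d) := by positivity
  have h3 : (0 : ℝ) ≤ cc S.p i E := by positivity
  calc (∑ s, (cc S.p i (F s) : ℝ)) * (|S.a i| * ((2 / 3 : ℝ) ^ i * (3 / 2 : ℝ) ^ (d + 1)))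
      ≤ cc S.p i E * (|S.a i| * ((2 / 3 : ℝ) ^ i * (3 / 2 : ℝ) ^ (d + 1))) := by gcongr
    _ = (3 / 2) * (cc S.p i E * (|S.a i| * ((2 / 3 : ℝ) ^ i * (3 / 2 : ℝ) ^ d))) := by ring
    _ ≤ _ := by
      apply mul_le_mul_of_nonneg_right hf
      positivity

theorem xx_union {A A' : Finset ℕ} (h : Disjoint A A') : S.xx (A ∪ A') = S.xx A + S.xx A' := by
  unfold xx
  exact Finset.sum_union h

theorem N_xx_union (hN : IsSchlumprechtNorm N) {A A' : Finset ℕ} (h : Disjoint A A')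
    (E : Finset ℕ) : N (proj E (S.xx (A ∪ A'))) ≤ N (proj E (S.xx A)) + N (proj E (S.xx A')) := by
  rw [S.xx_union h, proj_add]
  exact N_add hN _ _

theorem xx_apply {A : Finset ℕ} {i k : ℕ} (hk : k ∈ blk S.p i) :
    S.xx A k = if i ∈ A then S.a i * S.u i k else 0 := by
  unfold xx
  rw [Finsupp.finsetSum_apply]
  have h0 : ∀ j, j ≠ i → (S.a j • S.u j) k = 0 := by
    intro j hj
    rw [Finsupp.smul_apply]
    have : S.u j k = 0 := by
      by_contra h
      exact hj (blk_eq S.hp (S.hsupp j (Finsupp.mem_support_iff.mpr h)) hk)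
    rw [this, smul_zero]
  split_ifs with h
  · rw [Finset.sum_eq_single i (fun j _ hj => h0 j hj) (fun h' => absurd h h')]
    simp
  · apply Finset.sum_eq_zero
    intro j hj
    exact h0 j (fun e => h (e ▸ hj))

theorem X_apply {i k : ℕ} (hk : k ∈ blk S.p i) : S.X k = S.a i * S.u i k := by
  unfold X
  rw [S.xx_apply hk]
  split_ifs with h
  · rfl
  · rw [Finsupp.notMem_support_iff.mp h, zero_mul]

theorem proj_cell_mem {A F : Finset ℕ} {i : ℕ} (hi : i ∈ A) (hF : F ⊆ blk S.p i) :
    proj F (S.xx A) = proj F S.X := by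
  ext k
  rw [proj_apply, proj_apply]
  split_ifs with h
  · rw [S.xx_apply (hF h), S.X_apply (hF h), if_pos hi]
  · rfl

theorem proj_cell_notMem {A F : Finset ℕ} {i : ℕ} (hi : i ∉ A) (hF : F ⊆ blk S.p i) :
    proj F (S.xx A) = 0 := by
  ext k
  rw [proj_apply]
  split_ifs with h
  · rw [S.xx_apply (hF h), if_neg hi]
    rfl
  · rfl

theorem N_xx_le (hN : IsSchlumprechtNorm N) (A : Finset ℕ) : N (S.xx A) ≤ ∑ i ∈ A, |S.a i| := by
  unfold xx
  refine (N_sum hN _ _).trans ?_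
  apply Finset.sum_le_sum
  intro i _
  rw [N_smul hN]
  have := S.hu i
  have h0 := abs_nonneg (S.a i)
  nlinarith

theorem mem_support_xx {A : Finset ℕ} {k : ℕ} (hk : k ∈ (S.xx A).support) :
    ∃ i ∈ A, k ∈ blk S.p i := by
  by_contra h
  push Not at h
  rw [Finsupp.mem_support_iff] at hk
  apply hk
  unfold xx
  rw [Finsupp.finsetSum_apply]
  apply Finset.sum_eq_zero
  intro i hi
  rw [Finsupp.smul_apply]
  have : S.u i k = 0 := by
    by_contra h'
    exact h i hi (S.hsupp i (Finsupp.mem_support_iff.mpr h'))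
  rw [this, smul_zero]

theorem W_ge (i : ℕ) : S.M i ≤ S.W i := by
  refine le_trans ?_ (S.hW i)
  exact Nat.le_self_pow (by norm_num) _

theorem M0_ge : 2 ≤ S.M 0 := by
  by_contra h
  have h1 : S.M 0 ≤ 1 := by omega
  have := flog_nat_mono h1
  have h2 := S.hM0
  have h3 := flog_one
  push_cast at this
  linarith

theorem M_ge (i : ℕ) : 2 ≤ S.M i := S.M0_ge.trans (S.hM.monotone (Nat.zero_le i))

abbrev G (A E : Finset ℕ) (b : ℕ → ℕ) (L : List Cfg) : Prop := LGood N S.C1 S.p A E b L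

noncomputable abbrev val (c : Cfg) : ℝ := cval N S.X c

/-- data at a splitting node -/
structure Node (E A : Finset ℕ) (d : ℕ) (l : ℕ) (F : Fin l → Finset ℕ) (A' : Finset ℕ) : Prop where
  hl : 2 ≤ l
  hF : FSucc F
  hFE : ∀ s, F s ⊂ E
  hA : A' ⊆ A
  hc : ∀ i ∈ A', 1 ≤ cc S.p i E
  hd : ∀ i ∈ A', d < i
  hdisj : ∀ i ∈ A', ∃ x ∈ E, x ∈ blk S.p i
  hNn : N (proj E (S.xx A)) ≤ (flog l)⁻¹ * ∑ s, N (proj (F s) (S.xx A')) + S.Loss E (A \ A') d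

theorem step (hN : IsSchlumprechtNorm N) (E A : Finset ℕ) (d : ℕ) :
    (∃ c, S.G A E (bud S.p S.W E d) [c] ∧ N (proj E (S.xx A)) ≤ S.val c + S.Loss E A d) ∨
    ∃ (l : ℕ) (F : Fin l → Finset ℕ) (A' : Finset ℕ), S.Node E A d l F A' := by
  classical
  by_cases hleaf : ∃ i, E ⊆ blk S.p i
  · left
    obtain ⟨i, hi⟩ := hleaf
    have hL := S.Loss_nonneg E A d
    by_cases hiA : i ∈ A
    · refine ⟨[(E, 1)], LGood.single hN S.hC1 S.hp (InHull.of_subset (subset_refl _)) hiA hi ?_, ?_⟩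
      · intro hne
        unfold bud
        rw [if_pos ⟨hi, hne⟩]
        omega
      · rw [Setup.val, cval_single, S.proj_cell_mem hiA hi]
        linarith
    · refine ⟨[], ?_, ?_⟩
      · constructor <;> simp [AdmC, cnt]
        intro x
        exact mul_nonneg (by linarith [S.hC1]) (N_nonneg hN x)
      · rw [Setup.val, cval_nil, S.proj_cell_notMem hiA hi, N_zero hN]
        linarith
  · push Not at hleaf
    set A' := A.filter (fun i => d < i ∧ ∃ x ∈ E, x ∈ blk S.p i) with hA'
    have hA'A : A' ⊆ A := Finset.filter_subset _ _
    have hc : ∀ i ∈ A', 1 ≤ cc S.p i E := by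
      intro i hi
      rw [hA', Finset.mem_filter] at hi
      obtain ⟨_, _, x, hx, hxi⟩ := hi
      exact cc_pos hx hxi (hleaf i)
    have hd : ∀ i ∈ A', d < i := by
      intro i hi
      rw [hA', Finset.mem_filter] at hi
      exact hi.2.1
    have hdj : ∀ i ∈ A', ∃ x ∈ E, x ∈ blk S.p i := by
      intro i hi
      rw [hA', Finset.mem_filter] at hi
      exact hi.2.2
    have hun : A = A' ∪ (A \ A') := (Finset.union_sdiff_of_subset hA'A).symm
    have hdis : Disjoint A' (A \ A') := Finset.disjoint_sdiff
    have hrest : N (proj E (S.xx (A \ A'))) ≤ S.Loss E (A \ A') d := by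
      unfold xx Loss
      rw [proj_sum]
      refine (N_sum hN _ _).trans ?_
      apply Finset.sum_le_sum
      intro i hi
      rw [Finset.mem_sdiff, hA', Finset.mem_filter] at hi
      rw [proj_smul, N_smul hN]
      by_cases ht : ∃ x ∈ E, x ∈ blk S.p i
      · have hid : i ≤ d := by
          by_contra h
          exact hi.2 ⟨hi.1, by omega, ht⟩
        obtain ⟨x, hx, hxi⟩ := ht
        have h1 : (1 : ℝ) ≤ cc S.p i E := by exact_mod_cast cc_pos hx hxi (hleaf i)
        have h2 : N (proj E (S.u i)) ≤ 1 := (N_proj_le hN _ _).trans (S.hu i)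
        have h3 : (1 : ℝ) ≤ (2 / 3 : ℝ) ^ i * (3 / 2 : ℝ) ^ d := by
          obtain ⟨e, rfl⟩ := Nat.exists_eq_add_of_le hid
          rw [pow_add, ← mul_assoc, ← mul_pow]
          norm_num
          exact one_le_pow₀ (by norm_num)
        have h4 := abs_nonneg (S.a i)
        calc |S.a i| * N (proj E (S.u i)) ≤ |S.a i| * 1 := by gcongr
          _ ≤ |S.a i| * ((2 / 3 : ℝ) ^ i * (3 / 2 : ℝ) ^ d) := by gcongr
          _ = 1 * (|S.a i| * ((2 / 3 : ℝ) ^ i * (3 / 2 : ℝ) ^ d)) := by ring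
          _ ≤ _ := by gcongr
      · push Not at ht
        have : proj E (S.u i) = 0 := by
          apply proj_eq_zero
          apply Finset.disjoint_left.mpr
          intro k hk hk'
          exact ht k hk (S.hsupp i hk')
        rw [this, N_zero hN, mul_zero]
        positivity
    have hN1 : N (proj E (S.xx A)) ≤ N (proj E (S.xx A')) + S.Loss E (A \ A') d := by
      have := S.N_xx_union hN hdis E
      rw [← hun] at this
      linarith
    set y := proj E (S.xx A') with hy
    have hysupp : y.support ⊆ E := by
      intro k hk
      rw [Finsupp.mem_support_iff, hy, proj_apply] at hk
      by_contra h
      rw [if_neg h] at hk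
      exact hk rfl
    have hysupp' : y.support ⊆ (S.xx A').support := by
      intro k hk
      rw [Finsupp.mem_support_iff, hy, proj_apply] at hk
      rw [Finsupp.mem_support_iff]
      intro h
      rw [h] at hk
      simp at hk
    have hLm : S.Loss E (A \ A') d ≤ S.Loss E A d := S.Loss_mono E Finset.sdiff_subset d
    by_cases hsup : supNorm y < N y
    · right
      obtain ⟨l, hl, F, hF, hFs, hval⟩ := attain hN y hsup
      refine ⟨l, F, A', hl, hF, fun s => lt_of_lt_of_le (hFs s) hysupp, hA'A, hc, hd, hdj, ?_⟩
      have : ∀ s, proj (F s) y = proj (F s) (S.xx A') := by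
        intro s
        rw [hy]
        exact proj_proj_of_subset ((hFs s).subset.trans hysupp) _
      simp only [this] at hval
      linarith
    · left
      push Not at hsup
      by_cases hy0 : y = 0
      · refine ⟨[], ?_, ?_⟩
        · constructor <;> simp [AdmC, cnt]
          intro x
          exact mul_nonneg (by linarith [S.hC1]) (N_nonneg hN x)
        · rw [Setup.val, cval_nil]
          rw [hy0, N_zero hN] at hN1
          linarith
      · obtain ⟨k, hk, hks⟩ := exists_abs_eq y hy0
        obtain ⟨i, hi, hki⟩ := S.mem_support_xx (hysupp' hk)
        have hkE := hysupp hk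
        have hsub : ({k} : Finset ℕ) ⊆ blk S.p i := by simpa using hki
        refine ⟨[({k}, 1)], LGood.single hN S.hC1 S.hp (InHull.of_subset (by simpa using hkE))
          (hA'A hi) hsub ?_, ?_⟩
        · intro _
          have := bud_ge (W := S.W) (hc i hi) (hd i hi)
          have h2 := S.W_ge i
          have h3 := S.M_ge i
          omega
        · rw [Setup.val, cval_single, one_mul]
          have h1 := abs_le_N hN (proj {k} S.X) k
          rw [← S.proj_cell_mem hi hsub] at h1
          have h2 : proj {k} (S.xx A') k = y k := by
            rw [hy, proj_apply, proj_apply, if_pos hkE]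
            simp
          rw [h2, S.proj_cell_mem hi hsub] at h1
          linarith

end Setup


/-! ### Part 4: the detachment lemma -/

theorem flog_four : flog 4 ≤ 5 / 2 := by
  unfold flog
  rw [Real.logb_le_iff_le_rpow (by norm_num) (by norm_num)]
  have h : ((2 : ℝ) ^ (5 / 2 : ℝ)) ^ 2 = 32 := by
    rw [← Real.rpow_natCast, ← Real.rpow_mul (by norm_num)]
    norm_num
  have h0 : (0 : ℝ) ≤ (2 : ℝ) ^ (5 / 2 : ℝ) := by positivity
  nlinarith

theorem LGood.nilcfg {N : c00 → ℝ} (hN : IsSchlumprechtNorm N) {C1 : ℝ} (hC1 : 1 ≤ C1)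
    {p : ℕ → ℕ} {A E : Finset ℕ} {b : ℕ → ℕ} : LGood N C1 p A E b [[]] := by
  constructor <;> simp [AdmC, _root_.cnt]
  intro x
  exact mul_nonneg (by linarith) (N_nonneg hN x)

theorem LGood.cross {N : c00 → ℝ} {C1 : ℝ} {p : ℕ → ℕ} (hp : StrictMono p)
    {A1 A2 E1 E2 : Finset ℕ} {b1 b2 : ℕ → ℕ} {L1 L2 : List Cfg}
    (h1 : LGood N C1 p A1 E1 b1 L1) (h2 : LGood N C1 p A2 E2 b2 L2)
    (h : ∀ i ∈ A1, ∀ j ∈ A2, i < j) :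
    ∀ k ∈ L1.flatten, ∀ k' ∈ L2.flatten, FLt k.1 k'.1 := by
  intro k hk k' hk'
  obtain ⟨i, hi, hi'⟩ := h1.blk k hk
  obtain ⟨j, hj, hj'⟩ := h2.blk k' hk'
  exact (blk_lt hp (h i hi j hj)).mono hi' hj'

theorem four_if {P Q R T : Prop} [Decidable P] [Decidable Q] [Decidable R] [Decidable T] (b : ℕ)
    (h1 : P → ¬ Q) (h2 : P → ¬ R) (h3 : P → ¬ T) (h4 : Q → ¬ R) (h5 : Q → ¬ T) (h6 : R → ¬ T) :
    (if P then b else 0) + ((if Q then b else 0) + ((if R then b else 0) + (if T then b else 0)))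
      ≤ b := by
  by_cases k1 : P
  · simp [k1, h1 k1, h2 k1, h3 k1]
  · by_cases k2 : Q
    · simp [k1, k2, h4 k2, h5 k2]
    · by_cases k3 : R
      · simp [k1, k2, k3, h6 k3]
      · simp only [k1, k2, k3, if_false]
        split_ifs <;> omega

theorem three_split (J : Finset ℕ) : ∃ B1 Mid B2 : Finset ℕ, J = B1 ∪ (Mid ∪ B2) ∧
    Disjoint B1 (Mid ∪ B2) ∧ Disjoint Mid B2 ∧ (∀ i ∈ B1, ∀ j ∈ B1, i = j) ∧
    (∀ i ∈ B2, ∀ j ∈ B2, i = j) ∧ (∀ i ∈ B1, ∀ j ∈ Mid ∪ B2, i < j) ∧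
    (∀ i ∈ Mid, ∀ j ∈ B2, i < j) ∧ (∀ i ∈ Mid, (∃ j ∈ J, j < i) ∧ (∃ j ∈ J, i < j)) := by
  classical
  refine ⟨J.filter (fun j => ∀ k ∈ J, j ≤ k),
    J.filter (fun j => (¬ ∀ k ∈ J, j ≤ k) ∧ ¬ ∀ k ∈ J, k ≤ j),
    J.filter (fun j => (¬ ∀ k ∈ J, j ≤ k) ∧ ∀ k ∈ J, k ≤ j), ?_, ?_, ?_, ?_, ?_, ?_, ?_, ?_⟩
  · ext j
    simp only [Finset.mem_union, Finset.mem_filter]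
    tauto
  · rw [Finset.disjoint_left]
    intro j
    simp only [Finset.mem_union, Finset.mem_filter]
    tauto
  · rw [Finset.disjoint_left]
    intro j
    simp only [Finset.mem_filter]
    tauto
  · intro i hi j hj
    simp only [Finset.mem_filter] at hi hj
    exact le_antisymm (hi.2 j hj.1) (hj.2 i hi.1)
  · intro i hi j hj
    simp only [Finset.mem_filter] at hi hj
    exact le_antisymm (hj.2.2 i hi.1) (hi.2.2 j hj.1)
  · intro i hi j hj
    simp only [Finset.mem_union, Finset.mem_filter] at hi hj
    have hjJ : j ∈ J := by tauto
    have hnj : ¬ ∀ k ∈ J, j ≤ k := by tauto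
    refine lt_of_le_of_ne (hi.2 j hjJ) ?_
    rintro rfl
    exact hnj hi.2
  · intro i hi j hj
    simp only [Finset.mem_filter] at hi hj
    refine lt_of_le_of_ne (hj.2.2 i hi.1) ?_
    rintro rfl
    exact hi.2.2 hj.2.2
  · intro i hi
    simp only [Finset.mem_filter] at hi
    obtain ⟨_, h1, h2⟩ := hi
    push Not at h1 h2
    exact ⟨h1, h2⟩

namespace Setup

variable {N : c00 → ℝ} (S : Setup N)

def Crude (n : ℕ) : Prop := ∀ (E A : Finset ℕ) (d : ℕ), E.card < n →
  ∃ c, S.G A E (bud S.p S.W E d) [c] ∧ N (proj E (S.xx A)) ≤ 5 * S.val c + S.Loss E A d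

noncomputable def DD (l : ℕ) : ℝ := 1 + 208 / Real.sqrt (flog l)

def Refined (n : ℕ) : Prop := ∀ (l : ℕ) (A E : Finset ℕ) (d : ℕ) (F : Fin l → Finset ℕ),
  S.M 0 ≤ l → (∀ i ∈ A, l < S.M i) → FSucc F → (∀ s, F s ⊆ E) → (∀ s, (F s).card < n) →
  ∃ c, S.G A E (fun i => ∑ s, bud S.p S.W (F s) d i) [c] ∧
    (flog l)⁻¹ * ∑ s, N (proj (F s) (S.xx A)) ≤
      DD l * S.val c + (flog l)⁻¹ * ∑ s, S.Loss (F s) A d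

noncomputable def avg {l : ℕ} (F : Fin l → Finset ℕ) (A : Finset ℕ) : ℝ :=
  (flog l)⁻¹ * ∑ s, N (proj (F s) (S.xx A))

theorem avg_union (hN : IsSchlumprechtNorm N) {l : ℕ} (F : Fin l → Finset ℕ) {A A' : Finset ℕ}
    (h : Disjoint A A') : S.avg F (A ∪ A') ≤ S.avg F A + S.avg F A' := by
  unfold avg
  rw [← mul_add, ← Finset.sum_add_distrib]
  apply mul_le_mul_of_nonneg_left _ (inv_nonneg.mpr (flog_nonneg l))
  exact Finset.sum_le_sum fun s _ => S.N_xx_union hN h _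

theorem avg_le (hN : IsSchlumprechtNorm N) {l : ℕ} (hl : 2 ≤ l) {F : Fin l → Finset ℕ}
    (hF : FSucc F) {E : Finset ℕ} (hFE : ∀ s, F s ⊆ E) (A : Finset ℕ) :
    S.avg F A ≤ N (proj E (S.xx A)) := by
  unfold avg
  rw [inv_mul_le_iff₀ (flog_pos hl)]
  have := sum_le_N hN (proj E (S.xx A)) hl F hF
  simpa only [proj_proj_of_subset (hFE _)] using this

theorem block_part (hN : IsSchlumprechtNorm N) {l : ℕ} (hl : 2 ≤ l) {F : Fin l → Finset ℕ}
    (hF : FSucc F) {E : Finset ℕ} (hFE : ∀ s, F s ⊆ E) (B : Finset ℕ)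
    (hB : ∀ i ∈ B, ∀ j ∈ B, i = j) :
    ∃ c, S.G B E (fun _ => 1) [c] ∧ S.avg F B ≤ S.val c := by
  classical
  rcases B.eq_empty_or_nonempty with rfl | ⟨i, hi⟩
  · refine ⟨[], LGood.nilcfg hN S.hC1, ?_⟩
    unfold avg xx
    simp [proj_zero, N_zero hN, Setup.val, cval_nil]
  · refine ⟨[(E ∩ blk S.p i, 1)], LGood.single hN S.hC1 S.hp
      (InHull.of_subset Finset.inter_subset_left) hi Finset.inter_subset_right (fun _ => le_rfl), ?_⟩
    rw [Setup.val, cval_single, one_mul, ← S.proj_cell_mem hi Finset.inter_subset_right,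
      ← proj_proj]
    refine (S.avg_le hN hl hF hFE B).trans ?_
    rw [proj_eq_self (E := blk S.p i) (x := S.xx B)]
    intro k hk
    obtain ⟨j, hj, hkj⟩ := S.mem_support_xx hk
    rwa [hB i hi j hj]

theorem one_le_DD (l : ℕ) : 1 ≤ DD l := by
  unfold DD
  have : 0 ≤ 208 / Real.sqrt (flog l) := by positivity
  linarith

theorem DD_le_two {l : ℕ} (hl : S.M 0 ≤ l) : DD l ≤ 2 := by
  unfold DD
  have h := S.hM0.trans (flog_nat_mono hl)
  have h2 : 208 ≤ Real.sqrt (flog l) := Real.le_sqrt_of_sq_le h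
  have : 208 / Real.sqrt (flog l) ≤ 1 := by
    rw [div_le_one (by linarith)]
    exact h2
  linarith

set_option maxHeartbeats 1000000 in
theorem detach (hN : IsSchlumprechtNorm N) {n : ℕ} (hR : S.Refined n) {E A A' : Finset ℕ} {d l : ℕ}
    {F : Fin l → Finset ℕ} (hE : E.card < n + 1) (nd : S.Node E A d l F A') (hl0 : S.M 0 ≤ l) :
    ∃ L : List Cfg, L.length ≤ 4 ∧ S.G A' E (bud S.p S.W E d) L ∧
      S.avg F A' ≤ DD l * S.val L.flatten + S.Loss E A' d := by
  classical
  have hFE : ∀ s, F s ⊆ E := fun s => (nd.hFE s).subset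
  have hFc : ∀ s, (F s).card < n := fun s => by
    have := Finset.card_lt_card (nd.hFE s)
    omega
  have hfp := flog_pos nd.hl
  set J := A'.filter (fun i => Jbad N S.u S.M l i) with hJ
  set Ng := A'.filter (fun i => S.M i ≤ l ∧ ¬ Jbad N S.u S.M l i) with hNg
  set AA := A'.filter (fun i => l < S.M i) with hAA
  have hJl : ∀ i ∈ J, S.M i ≤ l := fun i hi => (Finset.mem_filter.mp hi).2.1
  have hun : A' = J ∪ (Ng ∪ AA) := by
    ext i
    simp only [hJ, hNg, hAA, Finset.mem_union, Finset.mem_filter]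
    have : S.M i ≤ l ∨ l < S.M i := le_or_gt _ _
    tauto
  have hd1 : Disjoint J (Ng ∪ AA) := by
    rw [Finset.disjoint_left]
    intro i hi hi'
    have h1 := hJl i hi
    simp only [hJ, hNg, hAA, Finset.mem_union, Finset.mem_filter] at hi hi'
    rcases hi' with h | h
    · exact h.2.2 hi.2
    · omega
  have hd2 : Disjoint Ng AA := by
    rw [Finset.disjoint_left]
    intro i hi hi'
    simp only [hNg, hAA, Finset.mem_filter] at hi hi'
    omega
  obtain ⟨B1, Mid, B2, hJ3, hB1, hB2, hB1u, hB2u, hB1lt, hB2lt, hMid⟩ := three_split J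
  have hJA' : J ⊆ A' := Finset.filter_subset _ _
  have hB1J : B1 ⊆ J := by rw [hJ3]; exact Finset.subset_union_left
  have hMJ : Mid ⊆ J := by
    rw [hJ3]; exact Finset.subset_union_left.trans Finset.subset_union_right
  have hB2J : B2 ⊆ J := by
    rw [hJ3]; exact Finset.subset_union_right.trans Finset.subset_union_right
  have hAAA' : AA ⊆ A' := Finset.filter_subset _ _
  have hJAA : ∀ i ∈ J, ∀ j ∈ AA, i < j := by
    intro i hi j hj
    have h1 := hJl i hi
    have h2 := (Finset.mem_filter.mp hj).2
    exact S.hM.lt_iff_lt.mp (by omega)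
  have hbudA : ∀ i ∈ A', S.W i ≤ bud S.p S.W E d i := fun i hi => bud_ge (nd.hc i hi) (nd.hd i hi)
  have hbudA1 : ∀ i ∈ A', 1 ≤ bud S.p S.W E d i := fun i hi => by
    have h1 := hbudA i hi
    have h2 := S.W_ge i
    have h3 := S.M_ge i
    omega
  -- left and right
  obtain ⟨c1, hc1, hv1⟩ := S.block_part hN nd.hl nd.hF hFE B1 hB1u
  obtain ⟨c3, hc3, hv3⟩ := S.block_part hN nd.hl nd.hF hFE B2 hB2u
  -- middle
  obtain ⟨E2, c2, hc2, hv2⟩ := S.H3 l Mid (fun i hi => (Finset.mem_filter.mp (hMJ hi)).2)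
  have hv2' : S.avg F Mid ≤ S.val c2 := by
    refine le_trans ?_ hv2
    refine (S.avg_le hN nd.hl nd.hF hFE Mid).trans ?_
    exact (N_proj_le hN _ _).trans (S.N_xx_le hN Mid)
  have hull2 : ∀ k ∈ [c2].flatten, InHull k.1 E := by
    intro k hk x hx
    obtain ⟨i, hi, hki⟩ := hc2.blk k hk
    obtain ⟨⟨j, hj, hji⟩, ⟨j', hj', hij'⟩⟩ := hMid i hi
    obtain ⟨y, hy, hyj⟩ := nd.hdisj j (hJA' hj)
    obtain ⟨y', hy', hyj'⟩ := nd.hdisj j' (hJA' hj')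
    exact ⟨⟨y, hy, (blk_lt S.hp hji y hyj x (hki hx)).le⟩,
      ⟨y', hy', (blk_lt S.hp hij' x (hki hx) y' hyj').le⟩⟩
  -- rest
  obtain ⟨c4, hc4, hv4⟩ := hR l AA E (d + 1) F hl0 (fun i hi => (Finset.mem_filter.mp hi).2)
    nd.hF hFE hFc
  have hL4 := S.Loss_step AA nd.hl nd.hF hFE d
  -- negligible part
  have hvN : S.avg F Ng ≤ S.Loss E Ng d := by
    unfold avg
    rw [inv_mul_le_iff₀ hfp]
    calc ∑ s, N (proj (F s) (S.xx Ng)) ≤ ∑ s, ∑ i ∈ Ng, |S.a i| * N (proj (F s) (S.u i)) := by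
          apply Finset.sum_le_sum
          intro s _
          unfold xx
          rw [proj_sum]
          refine (N_sum hN _ _).trans (le_of_eq ?_)
          apply Finset.sum_congr rfl
          intro i _
          rw [proj_smul, N_smul hN]
      _ = ∑ i ∈ Ng, |S.a i| * ∑ s, N (proj (F s) (S.u i)) := by
          rw [Finset.sum_comm]
          simp only [Finset.mul_sum]
      _ ≤ ∑ i ∈ Ng, |S.a i| * ((2 / 3 : ℝ) ^ i * flog l) := by
          apply Finset.sum_le_sum
          intro i hi
          rw [hNg, Finset.mem_filter] at hi
          apply mul_le_mul_of_nonneg_left _ (abs_nonneg _)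
          by_contra hcon
          push Not at hcon
          exact hi.2.2 ⟨hi.2.1, F, nd.hF, hcon⟩
      _ ≤ flog l * S.Loss E Ng d := by
          unfold Loss
          rw [Finset.mul_sum]
          apply Finset.sum_le_sum
          intro i hi
          have h1 : (1 : ℝ) ≤ cc S.p i E := by
            exact_mod_cast nd.hc i (Finset.mem_of_mem_filter i hi)
          have h2 : (1 : ℝ) ≤ (3 / 2 : ℝ) ^ d := one_le_pow₀ (by norm_num)
          have h3 : 0 ≤ |S.a i| * (2 / 3 : ℝ) ^ i := by positivity
          have h4 : (1 : ℝ) ≤ cc S.p i E * (3 / 2 : ℝ) ^ d := one_le_mul_of_one_le_of_one_le h1 h2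
          calc |S.a i| * ((2 / 3 : ℝ) ^ i * flog l)
              = flog l * (|S.a i| * (2 / 3 : ℝ) ^ i * 1) := by ring
            _ ≤ flog l * (|S.a i| * (2 / 3 : ℝ) ^ i * (cc S.p i E * (3 / 2 : ℝ) ^ d)) := by
                gcongr
            _ = _ := by ring
  -- assemble
  set β : Finset ℕ → ℕ → ℕ := fun P i => if i ∈ P then bud S.p S.W E d i else 0 with hβ
  have g1 : S.G A' E (β B1) [c1] := hc1.mono' S.hp (hB1J.trans hJA') (subset_refl _)
    (fun i hi => by simp only [hβ, if_pos hi]; exact hbudA1 i (hJA' (hB1J hi)))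
  have g3 : S.G A' E (β B2) [c3] := hc3.mono' S.hp (hB2J.trans hJA') (subset_refl _)
    (fun i hi => by simp only [hβ, if_pos hi]; exact hbudA1 i (hJA' (hB2J hi)))
  have g2 : S.G A' E (β Mid) [c2] := hc2.mono S.hp (hMJ.trans hJA') hull2
    (fun i hi => by simp only [hβ, if_pos hi]; exact hbudA i (hJA' (hMJ hi)))
  have g4 : S.G A' E (β AA) [c4] := hc4.mono' S.hp hAAA' (subset_refl _)
    (fun i hi => by
      simp only [hβ, if_pos hi]
      have h1 := (Finset.mem_filter.mp hi).2
      have h2 := S.W_ge i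
      exact bud_sum nd.hF hFE (nd.hc i (hAAA' hi)) (nd.hd i (hAAA' hi)) (by omega))
  have g34 : S.G A' E (fun i => β B2 i + β AA i) ([c3] ++ [c4]) :=
    g3.append g4 (LGood.cross S.hp hc3 hc4 fun i hi j hj => hJAA i (hB2J hi) j hj) (fun i => le_rfl)
  have g234 : S.G A' E (fun i => β Mid i + (β B2 i + β AA i)) ([c2] ++ ([c3] ++ [c4])) := by
    refine g2.append g34 ?_ (fun i => le_rfl)
    intro k hk k' hk'
    rw [List.flatten_append, List.mem_append] at hk'
    rcases hk' with hk' | hk'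
    · exact LGood.cross S.hp hc2 hc3 hB2lt k hk k' hk'
    · exact LGood.cross S.hp hc2 hc4 (fun i hi j hj => hJAA i (hMJ hi) j hj) k hk k' hk'
  have g1234 : S.G A' E (bud S.p S.W E d) ([c1] ++ ([c2] ++ ([c3] ++ [c4]))) := by
    refine g1.append g234 ?_ ?_
    · intro k hk k' hk'
      rw [List.flatten_append, List.mem_append, List.flatten_append, List.mem_append] at hk'
      rcases hk' with hk' | hk' | hk'
      · exact LGood.cross S.hp hc1 hc2
          (fun i hi j hj => hB1lt i hi j (Finset.mem_union_left _ hj)) k hk k' hk'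
      · exact LGood.cross S.hp hc1 hc3
          (fun i hi j hj => hB1lt i hi j (Finset.mem_union_right _ hj)) k hk k' hk'
      · exact LGood.cross S.hp hc1 hc4 (fun i hi j hj => hJAA i (hB1J hi) j hj) k hk k' hk'
    · intro i
      have e1 : i ∈ B1 → i ∉ Mid := fun h h' => Finset.disjoint_left.mp hB1 h (Finset.mem_union_left _ h')
      have e2 : i ∈ B1 → i ∉ B2 := fun h h' => Finset.disjoint_left.mp hB1 h (Finset.mem_union_right _ h')
      have e3 : i ∈ Mid → i ∉ B2 := fun h h' => Finset.disjoint_left.mp hB2 h h'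
      have e4 : i ∈ J → i ∉ AA := fun h h' => lt_irrefl _ (hJAA i h i h')
      have e5 : i ∈ B1 → i ∈ J := fun h => hB1J h
      have e6 : i ∈ Mid → i ∈ J := fun h => hMJ h
      have e7 : i ∈ B2 → i ∈ J := fun h => hB2J h
      exact four_if _ e1 e2 (fun h => e4 (e5 h)) e3 (fun h => e4 (e6 h)) (fun h => e4 (e7 h))
  refine ⟨[c1] ++ ([c2] ++ ([c3] ++ [c4])), by simp, g1234, ?_⟩
  have hval : S.val ([c1] ++ ([c2] ++ ([c3] ++ [c4]))).flatten
      = S.val c1 + (S.val c2 + (S.val c3 + S.val c4)) := by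
    simp [Setup.val, cval_append]
  rw [hval]
  have a1 : S.avg F A' ≤ S.avg F J + (S.avg F Ng + S.avg F AA) := by
    have h1 := S.avg_union hN F hd1
    have h2 := S.avg_union hN F hd2
    rw [← hun] at h1
    linarith
  have a2 : S.avg F J ≤ S.avg F B1 + (S.avg F Mid + S.avg F B2) := by
    have h1 := S.avg_union hN F hB1
    have h2 := S.avg_union hN F hB2
    rw [← hJ3] at h1
    linarith
  have a3 : S.Loss E Ng d + S.Loss E AA d ≤ S.Loss E A' d := by
    rw [← S.Loss_union E hd2 d]
    apply S.Loss_mono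
    rw [hun]
    exact Finset.subset_union_right
  have a4 : S.avg F AA ≤ DD l * S.val c4 + (flog l)⁻¹ * ∑ s, S.Loss (F s) AA (d + 1) := hv4
  have p1 : 0 ≤ S.val c1 := cval_nonneg hN _ _ (fun k hk => hc1.nonneg k (by simpa using hk))
  have p2 : 0 ≤ S.val c2 := cval_nonneg hN _ _ (fun k hk => hc2.nonneg k (by simpa using hk))
  have p3 : 0 ≤ S.val c3 := cval_nonneg hN _ _ (fun k hk => hc3.nonneg k (by simpa using hk))
  have hD := one_le_DD l
  have m1 := mul_le_mul_of_nonneg_right hD p1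
  have m2 := mul_le_mul_of_nonneg_right hD p2
  have m3 := mul_le_mul_of_nonneg_right hD p3
  have : DD l * (S.val c1 + (S.val c2 + (S.val c3 + S.val c4))) = DD l * S.val c1 + DD l * S.val c2
    + DD l * S.val c3 + DD l * S.val c4 := by ring
  linarith

end Setup


/-! ### Part 5: the crude and the refined estimate -/

theorem ofFn_flatten_length_le {α : Type*} {n K : ℕ} (Ls : Fin n → List α)
    (h : ∀ s, (Ls s).length ≤ K) : (List.ofFn Ls).flatten.length ≤ n * K := by
  induction n with
  | zero => simp
  | succ n ih =>
    rw [List.ofFn_succ, List.flatten_cons, List.length_append]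
    have h1 := ih (fun s => Ls s.succ) (fun s => h _)
    have h2 := h 0
    have : (n + 1) * K = n * K + K := by ring
    omega

namespace Setup

variable {N : c00 → ℝ} (S : Setup N)

theorem Loss_split (E : Finset ℕ) {A A' : Finset ℕ} (h : A' ⊆ A) (d : ℕ) :
    S.Loss E A d = S.Loss E A' d + S.Loss E (A \ A') d := by
  rw [← S.Loss_union E Finset.disjoint_sdiff d, Finset.union_sdiff_of_subset h]

theorem children {E A A' : Finset ℕ} {d l : ℕ} {F : Fin l → Finset ℕ} (nd : S.Node E A d l F A')
    (hW : ∀ i ∈ A', l ≤ S.W i) {Ls : Fin l → List Cfg}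
    (h : ∀ s, S.G A' (F s) (bud S.p S.W (F s) (d + 1)) (Ls s)) :
    S.G A E (bud S.p S.W E d) (List.ofFn Ls).flatten := by
  have hFE : ∀ s, F s ⊆ E := fun s => (nd.hFE s).subset
  have := LGood.concat nd.hF hFE h
  exact this.mono' S.hp nd.hA (subset_refl _)
    (fun i hi => bud_sum nd.hF hFE (nd.hc i hi) (nd.hd i hi) (hW i hi))

theorem val_nonneg (hN : IsSchlumprechtNorm N) {A E : Finset ℕ} {b : ℕ → ℕ} {L : List Cfg}
    (h : S.G A E b L) : 0 ≤ S.val L.flatten := cval_nonneg hN _ _ h.nonneg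

theorem val_nonneg' (hN : IsSchlumprechtNorm N) {A E : Finset ℕ} {b : ℕ → ℕ} {c : Cfg}
    (h : S.G A E b [c]) : 0 ≤ S.val c := cval_nonneg hN _ _ (fun k hk => h.nonneg k (by simpa using hk))

theorem val_concat_single {n : ℕ} (cs : Fin n → Cfg) :
    S.val (List.ofFn fun s => [cs s]).flatten.flatten = ∑ s, S.val (cs s) := by
  rw [Setup.val, cval_concat]
  simp

theorem crude_step (hN : IsSchlumprechtNorm N) {n : ℕ} (hC : S.Crude n) (hR : S.Refined n) :
    S.Crude (n + 1) := by
  intro E A d hE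
  rcases S.step hN E A d with ⟨c, hc, hv⟩ | ⟨l, F, A', nd⟩
  · refine ⟨c, hc, ?_⟩
    have := S.val_nonneg' hN hc
    linarith
  · have hfp := flog_pos nd.hl
    have hFE : ∀ s, F s ⊆ E := fun s => (nd.hFE s).subset
    have hFc : ∀ s, (F s).card < n := fun s => by
      have := Finset.card_lt_card (nd.hFE s)
      omega
    have hLs := S.Loss_split E nd.hA d
    have hNn := nd.hNn
    by_cases hex : ∃ i ∈ A', S.M i ≤ l
    · obtain ⟨i, hi, hil⟩ := hex
      have hl0 : S.M 0 ≤ l := (S.hM.monotone (Nat.zero_le i)).trans hil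
      obtain ⟨L, hlen, hL, hv⟩ := S.detach hN hR hE nd hl0
      refine ⟨scaleC (flog (4 : ℕ))⁻¹ L.flatten, ?_, ?_⟩
      · exact (hL.scale hN S.hC1 (by norm_num) hlen).mono' S.hp nd.hA (subset_refl _)
          (fun i _ => le_rfl)
      · rw [Setup.val, cval_scale]
        have h0 : 0 ≤ cval N S.X L.flatten := S.val_nonneg hN hL
        have h4 : flog ((4 : ℕ) : ℝ) ≤ 5 / 2 := by push_cast; exact flog_four
        have h4p := flog_pos (n := 4) (by norm_num)
        have hD := S.DD_le_two hl0
        have hD1 := one_le_DD l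
        have e : DD l * cval N S.X L.flatten ≤
            5 * ((flog (4 : ℕ))⁻¹ * cval N S.X L.flatten) := by
          have h5 : (2 : ℝ) / 5 ≤ (flog (4 : ℕ))⁻¹ := by
            rw [le_inv_comm₀ (by norm_num) h4p]
            linarith
          nlinarith
        unfold avg at hv
        simp only [Setup.val] at hv
        linarith
    · push Not at hex
      choose cs hcs hvs using fun s => hC (F s) A' (d + 1) (hFc s)
      have hg := S.children nd (fun i hi => (hex i hi).le.trans (S.W_ge i)) hcs
      refine ⟨scaleC (flog l)⁻¹ (List.ofFn fun s => [cs s]).flatten.flatten, ?_, ?_⟩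
      · refine hg.scale hN S.hC1 nd.hl ?_
        simpa using ofFn_flatten_length_le (K := 1) (fun s => [cs s]) (fun s => by simp)
      · rw [Setup.val, cval_scale]
        have e1 := S.val_concat_single cs
        simp only [Setup.val] at e1
        rw [e1]
        have e2 : ∑ s, N (proj (F s) (S.xx A')) ≤
            5 * ∑ s, cval N S.X (cs s) + ∑ s, S.Loss (F s) A' (d + 1) := by
          rw [Finset.mul_sum, ← Finset.sum_add_distrib]
          exact Finset.sum_le_sum fun s _ => hvs s
        have e3 := mul_le_mul_of_nonneg_left e2 (inv_nonneg.mpr hfp.le)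
        have e4 := S.Loss_step A' nd.hl nd.hF hFE d
        rw [mul_add] at e3
        linarith

set_option maxHeartbeats 1000000 in
theorem Sg (hN : IsSchlumprechtNorm N) {n : ℕ} (hC : S.Crude (n + 1)) (hR : S.Refined n) {m : ℕ}
    (hm : S.M 0 ≤ m) {B : ℕ} (hB1 : 1 ≤ B) (hBm : B ≤ m)
    (hB2 : ∀ l, B < l → Real.sqrt (flog m) ≤ flog l) (g : ℕ) (hg : g ≤ 4) :
    ∀ (E A : Finset ℕ) (d : ℕ) (w : ℝ), E.card < n + 1 → (∀ i ∈ A, m < S.M i) → 0 ≤ w →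
      w * (3 / 2 : ℝ) ^ (4 - g) ≤ 1 →
      ∃ Lm Lt : List Cfg, S.G A E (bud S.p S.W E d) Lm ∧ S.G A E (bud S.p S.W E d) Lt ∧
        Lm.length ≤ 4 * B ^ g ∧ Lt.length ≤ B ^ g * (m + 1) ^ 4 ∧
        w * N (proj E (S.xx A)) ≤ (1 + 104 / Real.sqrt (flog m)) * S.val Lm.flatten +
          5 / Real.sqrt (flog m) * S.val Lt.flatten + w * S.Loss E A d := by
  have hq := S.hM0.trans (flog_nat_mono hm)
  set r := Real.sqrt (flog m) with hr
  have hr208 : 208 ≤ r := Real.le_sqrt_of_sq_le hq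
  have hrr : r ^ 2 = flog m := Real.sq_sqrt (flog_nonneg m)
  have hrp : 0 < r := by linarith
  have hD1 : 1 ≤ 1 + 104 / r := by
    have : 0 ≤ 104 / r := by positivity
    linarith
  induction g with
  | zero =>
    intro E A d w hE hA hw hw1
    obtain ⟨c, hc, hv⟩ := hC E A d hE
    refine ⟨[c], [], hc, LGood.nil, by simp, by simp, ?_⟩
    have h0 := S.val_nonneg' hN hc
    have hw5 : w * 5 ≤ 1 := by
      norm_num at hw1
      linarith
    have e1 := mul_le_mul_of_nonneg_left hv hw
    have e2 : w * 5 * S.val c ≤ 1 * S.val c := mul_le_mul_of_nonneg_right hw5 h0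
    have e3 : 1 * S.val c ≤ (1 + 104 / r) * S.val c := mul_le_mul_of_nonneg_right hD1 h0
    simp only [List.flatten_cons, List.flatten_nil, List.append_nil, Setup.val, cval_nil] at *
    nlinarith
  | succ g ih =>
    intro E A d w hE hA hw hw1
    have hBg : 1 ≤ B ^ g := Nat.one_le_pow _ _ hB1
    have hBg1 : 1 ≤ B ^ (g + 1) := Nat.one_le_pow _ _ hB1
    have hw1' : w ≤ 1 := by
      have : (1 : ℝ) ≤ (3 / 2 : ℝ) ^ (4 - (g + 1)) := one_le_pow₀ (by norm_num)
      nlinarith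
    rcases S.step hN E A d with ⟨c, hc, hv⟩ | ⟨l, F, A', nd⟩
    · refine ⟨[c], [], hc, LGood.nil, by simp only [List.length_singleton]; omega, by simp, ?_⟩
      have h0 := S.val_nonneg' hN hc
      have e1 := mul_le_mul_of_nonneg_left hv hw
      have e2 : w * S.val c ≤ 1 * S.val c := mul_le_mul_of_nonneg_right hw1' h0
      have e3 : 1 * S.val c ≤ (1 + 104 / r) * S.val c := mul_le_mul_of_nonneg_right hD1 h0
      simp only [List.flatten_cons, List.flatten_nil, List.append_nil, Setup.val, cval_nil] at *
      nlinarith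
    · have hfp := flog_pos nd.hl
      have hf32 := flog_ge nd.hl
      have hFE : ∀ s, F s ⊆ E := fun s => (nd.hFE s).subset
      have hFc : ∀ s, (F s).card < n + 1 := fun s => by
        have := Finset.card_lt_card (nd.hFE s)
        omega
      have hLs := S.Loss_split E nd.hA d
      have hNn := mul_le_mul_of_nonneg_left nd.hNn hw
      have hA' : ∀ i ∈ A', m < S.M i := fun i hi => hA i (nd.hA hi)
      have hstep := mul_le_mul_of_nonneg_left (S.Loss_step A' nd.hl nd.hF hFE d) hw
      by_cases hlB : l ≤ B
      · -- small
        have hwl : w * (flog l)⁻¹ * (3 / 2 : ℝ) ^ (4 - g) ≤ 1 := by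
          have e : 4 - g = 4 - (g + 1) + 1 := by omega
          rw [e, pow_succ]
          calc w * (flog l)⁻¹ * ((3 / 2 : ℝ) ^ (4 - (g + 1)) * (3 / 2))
              = (w * (3 / 2 : ℝ) ^ (4 - (g + 1))) * ((flog l)⁻¹ * (3 / 2)) := by ring
            _ ≤ 1 * 1 := by
                apply mul_le_mul hw1 _ (by positivity) (by norm_num)
                rw [inv_mul_le_iff₀ hfp]
                linarith
            _ = 1 := by norm_num
        choose Lm Lt hLm hLt hlm hlt hvs using fun s =>
          ih (by omega) (F s) A' (d + 1) (w * (flog l)⁻¹) (hFc s) hA' (by positivity) hwl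
        have hWl : ∀ i ∈ A', l ≤ S.W i := fun i hi => by
          have h1 := hA' i hi
          have h2 := S.W_ge i
          omega
        refine ⟨(List.ofFn Lm).flatten, (List.ofFn Lt).flatten, S.children nd hWl hLm,
          S.children nd hWl hLt, ?_, ?_, ?_⟩
        · refine (ofFn_flatten_length_le Lm hlm).trans ?_
          calc l * (4 * B ^ g) ≤ B * (4 * B ^ g) := by gcongr
            _ = 4 * B ^ (g + 1) := by ring
        · refine (ofFn_flatten_length_le Lt hlt).trans ?_
          calc l * (B ^ g * (m + 1) ^ 4) ≤ B * (B ^ g * (m + 1) ^ 4) := by gcongr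
            _ = B ^ (g + 1) * (m + 1) ^ 4 := by ring
        · simp only [Setup.val] at *
          rw [cval_concat, cval_concat]
          have e2 : ∑ s, w * (flog l)⁻¹ * N (proj (F s) (S.xx A')) ≤
              (1 + 104 / r) * ∑ s, cval N S.X (Lm s).flatten +
              5 / r * ∑ s, cval N S.X (Lt s).flatten +
              ∑ s, w * (flog l)⁻¹ * S.Loss (F s) A' (d + 1) := by
            rw [Finset.mul_sum, Finset.mul_sum, ← Finset.sum_add_distrib,
              ← Finset.sum_add_distrib]
            exact Finset.sum_le_sum fun s _ => hvs s
          rw [← Finset.mul_sum, ← Finset.mul_sum] at e2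
          rw [hLs]
          nlinarith
      · by_cases hl4 : flog l ≤ 4 * flog m
        · -- medium
          have hll := flog_le_four hl4
          have hrl := hB2 l (by omega)
          choose cs hcs hvs using fun s => hC (F s) A' (d + 1) (hFc s)
          have hWl : ∀ i ∈ A', l ≤ S.W i := fun i hi => by
            refine hll.trans (le_trans ?_ (S.hW i))
            exact Nat.pow_le_pow_left (hA' i hi) 4
          have hg := S.children nd hWl hcs
          refine ⟨[], (List.ofFn fun s => [cs s]).flatten, LGood.nil, hg, by simp, ?_, ?_⟩
          · have h1 : (List.ofFn fun s => [cs s]).flatten.length ≤ l := by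
              simpa using ofFn_flatten_length_le (K := 1) (fun s => [cs s]) (fun s => by simp)
            refine h1.trans (hll.trans ?_)
            exact Nat.le_mul_of_pos_left _ hBg1
          · have h0 : 0 ≤ ∑ s, cval N S.X (cs s) :=
              Finset.sum_nonneg fun s _ => S.val_nonneg' hN (hcs s)
            have e1 := S.val_concat_single cs
            simp only [Setup.val] at e1 ⊢
            rw [e1, List.flatten_nil, cval_nil]
            have e2 : ∑ s, N (proj (F s) (S.xx A')) ≤
                5 * ∑ s, cval N S.X (cs s) + ∑ s, S.Loss (F s) A' (d + 1) := by
              rw [Finset.mul_sum, ← Finset.sum_add_distrib]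
              exact Finset.sum_le_sum fun s _ => hvs s
            have e3 := mul_le_mul_of_nonneg_left (mul_le_mul_of_nonneg_left e2
              (inv_nonneg.mpr hfp.le)) hw
            have e5 : w * ((flog l)⁻¹ * (5 * ∑ s, cval N S.X (cs s))) ≤
                5 / r * ∑ s, cval N S.X (cs s) := by
              have h1 : (flog l)⁻¹ ≤ r⁻¹ := inv_anti₀ hrp hrl
              have h2 : w * (flog l)⁻¹ ≤ 1 * r⁻¹ :=
                mul_le_mul hw1' h1 (by positivity) (by norm_num)
              have h3 := mul_le_mul_of_nonneg_right h2 h0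
              rw [div_eq_mul_inv]
              nlinarith
            rw [hLs]
            rw [mul_add, mul_add] at e3
            rw [mul_add] at hNn
            linarith
        · -- huge
          push Not at hl4
          have hml : m < l := by
            by_contra h
            have h1 := flog_nat_mono (show l ≤ m by omega)
            have h2 := flog_nonneg m
            linarith
          have hl0 : S.M 0 ≤ l := by omega
          obtain ⟨L, hlen, hL, hv⟩ := S.detach hN hR hE nd hl0
          refine ⟨L, [], hL.mono' S.hp nd.hA (subset_refl _) (fun i _ => le_rfl), LGood.nil,
            by omega, by simp, ?_⟩
          have hDD : DD l ≤ 1 + 104 / r := by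
            unfold DD
            have h1 : 2 * r ≤ Real.sqrt (flog l) := by
              apply Real.le_sqrt_of_sq_le
              nlinarith
            have h2 : 208 / Real.sqrt (flog l) ≤ 208 / (2 * r) := by gcongr
            have h3 : 208 / (2 * r) = 104 / r := by
              field_simp
              norm_num
            linarith
          have h0 := S.val_nonneg hN hL
          have hv' := mul_le_mul_of_nonneg_left hv hw
          have e1 : w * (DD l * S.val L.flatten) ≤ (1 + 104 / r) * S.val L.flatten := by
            have h1 := one_le_DD l
            have h2 : w * DD l ≤ 1 * (1 + 104 / r) := mul_le_mul hw1' hDD (by linarith) (by norm_num)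
            have h3 := mul_le_mul_of_nonneg_right h2 h0
            linarith
          unfold avg at hv'
          rw [mul_add] at hv' hNn
          simp only [Setup.val] at *
          rw [hLs, List.flatten_nil, cval_nil]
          linarith

end Setup


/-! ### Part 6: conclusion of the upper estimate -/

theorem refined_arith {r q f1 f2 vm vt v : ℝ} (hr : 208 ≤ r) (hq : q = r ^ 2)
    (hf1 : f1 ≤ r ^ 2 + 4 * r + 7 / 2) (hf2 : f2 ≤ 5 * r ^ 2 + 4 * r + 12) (h1 : 0 ≤ f1)
    (h2 : 0 ≤ f2) (hvm : vm ≤ v) (hvt : vt ≤ v) (hv : 0 ≤ v) :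
    q⁻¹ * ((1 + 104 / r) * (f1 * vm) + 5 / r * (f2 * vt)) ≤ (1 + 208 / r) * v := by
  have hrp : 0 < r := by linarith
  have hqp : 0 < q := by rw [hq]; positivity
  rw [inv_mul_le_iff₀ hqp]
  have e1 : (1 + 104 / r) * (f1 * vm) ≤ (1 + 104 / r) * ((r ^ 2 + 4 * r + 7 / 2) * v) := by
    have := (mul_le_mul_of_nonneg_left hvm h1).trans (mul_le_mul_of_nonneg_right hf1 hv)
    gcongr
  have e2 : 5 / r * (f2 * vt) ≤ 5 / r * ((5 * r ^ 2 + 4 * r + 12) * v) := by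
    have := (mul_le_mul_of_nonneg_left hvt h2).trans (mul_le_mul_of_nonneg_right hf2 hv)
    gcongr
  have e3 : (1 + 104 / r) * (r ^ 2 + 4 * r + 7 / 2) + 5 / r * (5 * r ^ 2 + 4 * r + 12)
      ≤ q * (1 + 208 / r) := by
    rw [hq]
    have : q * (1 + 208 / r) - ((1 + 104 / r) * (r ^ 2 + 4 * r + 7 / 2) +
      5 / r * (5 * r ^ 2 + 4 * r + 12)) = (75 * r ^ 2 - (879 / 2) * r - 424) / r := by
      rw [hq]
      field_simp
      ring
    have h3 : 0 ≤ (75 * r ^ 2 - (879 / 2) * r - 424) / r := by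
      apply div_nonneg _ hrp.le
      nlinarith
    rw [hq] at this
    linarith
  have e4 := mul_le_mul_of_nonneg_right e3 hv
  nlinarith

namespace Setup

variable {N : c00 → ℝ} (S : Setup N)

set_option maxHeartbeats 1000000 in
theorem refined_step (hN : IsSchlumprechtNorm N) {n : ℕ} (hC : S.Crude (n + 1))
    (hR : S.Refined n) : S.Refined (n + 1) := by
  classical
  intro m A E d F hm hA hF hFE hFc
  have hm2 : 2 ≤ m := S.M0_ge.trans hm
  have hq := S.hM0.trans (flog_nat_mono hm)
  set r := Real.sqrt (flog m) with hr
  have hr208 : 208 ≤ r := Real.le_sqrt_of_sq_le hq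
  have hrr : r ^ 2 = flog m := Real.sq_sqrt (flog_nonneg m)
  have hrp : 0 < r := by linarith
  set B := Nat.findGreatest (fun B => flog B ≤ r) m with hB
  have hP1 : flog ((1 : ℕ) : ℝ) ≤ r := by
    rw [Nat.cast_one, flog_one]
    linarith
  have hB1 : 1 ≤ B := Nat.le_findGreatest (by omega) hP1
  have hBP : flog B ≤ r := Nat.findGreatest_spec (P := fun B : ℕ => flog B ≤ r) (m := 1) (n := m) (by omega) hP1
  have hBm : B ≤ m := Nat.findGreatest_le m
  have hB2 : ∀ l, B < l → r ≤ flog l := by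
    intro l hl
    by_cases hlm : l ≤ m
    · have := Nat.findGreatest_is_greatest (P := fun B : ℕ => flog B ≤ r) hl hlm
      exact (not_le.mp this).le
    · have := flog_nat_mono (show m ≤ l by omega)
      nlinarith
  choose Lm Lt hLm hLt hlm hlt hvs using fun s =>
    S.Sg hN hC hR hm hB1 hBm hB2 4 le_rfl (F s) A d 1 (hFc s) hA (by norm_num) (by norm_num)
  have gm := LGood.concat hF hFE hLm
  have gt := LGood.concat hF hFE hLt
  have lm := ofFn_flatten_length_le Lm hlm
  have lt := ofFn_flatten_length_le Lt hlt
  set n1 := m * (4 * B ^ 4) with hn1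
  set n2 := m * (B ^ 4 * (m + 1) ^ 4) with hn2
  have hB4 : 1 ≤ B ^ 4 := Nat.one_le_pow _ _ hB1
  have hm4 : 1 ≤ (m + 1) ^ 4 := Nat.one_le_pow _ _ (by omega)
  have h2n1 : 2 ≤ n1 := by
    rw [hn1]
    nlinarith
  have h2n2 : 2 ≤ n2 := by
    rw [hn2]
    have : 1 ≤ B ^ 4 * (m + 1) ^ 4 := Nat.mul_pos hB4 hm4
    nlinarith
  have f1 : flog n1 ≤ r ^ 2 + 4 * r + 7 / 2 := by
    have a1 := flog_mul m (4 * B ^ 4)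
    have a2 := flog_mul 4 (B ^ 4)
    have a3 := flog_pow B 4
    have a4 := flog_four
    rw [hn1]
    push_cast at *
    linarith
  have f2 : flog n2 ≤ 5 * r ^ 2 + 4 * r + 12 := by
    have a1 := flog_mul m (B ^ 4 * (m + 1) ^ 4)
    have a2 := flog_mul (B ^ 4) ((m + 1) ^ 4)
    have a3 := flog_pow B 4
    have a4 := flog_pow (m + 1) 4
    have a5 : flog ((m + 1 : ℕ) : ℝ) ≤ 5 / 2 + r ^ 2 := by
      have b1 := flog_nat_mono (show m + 1 ≤ 4 * m by omega)
      have b2 := flog_mul 4 m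
      have b3 := flog_four
      push_cast at *
      linarith
    rw [hn2]
    push_cast at *
    linarith
  have cm := gm.scale hN S.hC1 h2n1 lm
  have ct := gt.scale hN S.hC1 h2n2 lt
  have vm := cval_scale (N := N) S.X (flog n1)⁻¹ (List.ofFn Lm).flatten.flatten
  have vt := cval_scale (N := N) S.X (flog n2)⁻¹ (List.ofFn Lt).flatten.flatten
  set Cm := scaleC (flog n1)⁻¹ (List.ofFn Lm).flatten.flatten
  set Ct := scaleC (flog n2)⁻¹ (List.ofFn Lt).flatten.flatten
  have p1 := flog_pos h2n1
  have p2 := flog_pos h2n2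
  have vm' : cval N S.X (List.ofFn Lm).flatten.flatten = flog n1 * S.val Cm := by
    rw [Setup.val, vm]
    field_simp
  have vt' : cval N S.X (List.ofFn Lt).flatten.flatten = flog n2 * S.val Ct := by
    rw [Setup.val, vt]
    field_simp
  rw [cval_concat] at vm' vt'
  have nm := S.val_nonneg' hN cm
  have e2 : ∑ s, N (proj (F s) (S.xx A)) ≤
      (1 + 104 / r) * ∑ s, cval N S.X (Lm s).flatten +
      5 / r * ∑ s, cval N S.X (Lt s).flatten + ∑ s, S.Loss (F s) A d := by
    rw [Finset.mul_sum, Finset.mul_sum, ← Finset.sum_add_distrib, ← Finset.sum_add_distrib]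
    apply Finset.sum_le_sum
    intro s _
    have := hvs s
    simpa only [one_mul] using this
  rw [vm', vt'] at e2
  have hfp := flog_pos hm2
  have e3 := mul_le_mul_of_nonneg_left e2 (inv_nonneg.mpr hfp.le)
  rw [mul_add] at e3
  have hv : 0 ≤ max (S.val Cm) (S.val Ct) := nm.trans (le_max_left _ _)
  have e4 := refined_arith hr208 hrr.symm f1 f2 p1.le p2.le (le_max_left (S.val Cm) (S.val Ct))
    (le_max_right (S.val Cm) (S.val Ct)) hv
  have e5 : (flog m)⁻¹ * ∑ s, N (proj (F s) (S.xx A)) ≤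
      DD m * max (S.val Cm) (S.val Ct) + (flog m)⁻¹ * ∑ s, S.Loss (F s) A d := by
    unfold DD
    linarith
  rcases le_total (S.val Cm) (S.val Ct) with h | h
  · rw [max_eq_right h] at e5
    exact ⟨Ct, ct, e5⟩
  · rw [max_eq_left h] at e5
    exact ⟨Cm, cm, e5⟩

theorem both (hN : IsSchlumprechtNorm N) (n : ℕ) : S.Crude n ∧ S.Refined n := by
  induction n with
  | zero =>
    refine ⟨fun E A d h => absurd h (Nat.not_lt_zero _), ?_⟩
    intro l A E d F hl _ _ _ hc
    have h2 := S.M0_ge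
    exact absurd (hc ⟨0, by omega⟩) (Nat.not_lt_zero _)
  | succ n ih =>
    have h := S.crude_step hN ih.1 ih.2
    exact ⟨h, S.refined_step hN h ih.2⟩

theorem stage1 (hN : IsSchlumprechtNorm N) : ∃ (E : Finset ℕ) (c : Cfg),
    LGood N S.C1 S.p S.a.support E (fun i => 2 * i * S.W i + 1) [c] ∧
    N S.X ≤ 5 * S.val c + ∑ i ∈ S.a.support, 2 * (|S.a i| * (2 / 3 : ℝ) ^ i) := by
  set E := S.X.support with hE
  obtain ⟨c, hc, hv⟩ := (S.both hN (E.card + 1)).1 E S.a.support 0 (by omega)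
  refine ⟨E, c, hc.mono' S.hp (subset_refl _) (subset_refl _) ?_, ?_⟩
  · intro i _
    unfold bud
    have h := cc_le_two S.p i E
    have h1 : (if E ⊆ blk S.p i ∧ E.Nonempty then 1 else 0) ≤ 1 := by split_ifs <;> omega
    simp only [Nat.sub_zero]
    gcongr
  · have h1 : proj E (S.xx S.a.support) = S.X := proj_eq_self (subset_refl _)
    rw [h1] at hv
    refine hv.trans ?_
    gcongr
    unfold Loss
    apply Finset.sum_le_sum
    intro i _
    have h : (cc S.p i E : ℝ) ≤ 2 := by exact_mod_cast cc_le_two S.p i E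
    simp only [pow_zero, mul_one]
    gcongr

end Setup


/-! ### Part 7: transfer to another block sequence -/

theorem pairwise_cases {α : Type*} {R : α → α → Prop} {l : List α} (h : l.Pairwise R) {x y : α}
    (hx : x ∈ l) (hy : y ∈ l) : x = y ∨ R x y ∨ R y x := by
  obtain ⟨i, hi, rfl⟩ := List.getElem_of_mem hx
  obtain ⟨j, hj, rfl⟩ := List.getElem_of_mem hy
  rw [List.pairwise_iff_getElem] at h
  rcases lt_trichotomy i j with hij | hij | hij
  · exact Or.inr (Or.inl (h i j hi hj hij))
  · subst hij
    exact Or.inl rfl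
  · exact Or.inr (Or.inr (h j i hj hi hij))

theorem FLt.trans' {F F' F'' : Finset ℕ} (h : FLt F F') (h' : FLt F' F'') (hne : F'.Nonempty) :
    FLt F F'' := by
  obtain ⟨y, hy⟩ := hne
  intro x hx z hz
  exact (h x hx y hy).trans (h' y hy z hz)

theorem FLt.irr {F : Finset ℕ} (h : FLt F F) : ¬ F.Nonempty := fun ⟨x, hx⟩ =>
  lt_irrefl x (h x hx x hx)

theorem reembed {p p' : ℕ → ℕ} (hp : StrictMono p) (hp' : StrictMono p') (c : Cfg)
    (pw : c.Pairwise (fun k k' => FLt k.1 k'.1)) (hb : ∀ k ∈ c, ∃ i, k.1 ⊆ blk p i)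
    (K : ℕ → ℕ) (hcnt : ∀ i, cnt p i c ≤ K i) (R : ℕ → Finset ℕ → Finset ℕ → Prop)
    (hprof : ∀ i (F : Fin (K i) → Finset ℕ), FSucc F → ∃ G : Fin (K i) → Finset ℕ, FSucc G ∧
      ∀ k, R i (F k) (G k)) :
    ∃ G : Finset ℕ → Finset ℕ, (∀ k ∈ c, ∀ k' ∈ c, FLt k.1 k'.1 → FLt (G k.1) (G k'.1)) ∧
      ∀ k ∈ c, ∀ i, k.1.Nonempty → k.1 ⊆ blk p i → ∃ G0, R i k.1 G0 ∧ G k.1 = G0 ∩ blk p' i := by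
  classical
  set T : ℕ → Finset (Finset ℕ) := fun i =>
    ((c.filter (fun k => decide (k.1.Nonempty ∧ k.1 ⊆ blk p i))).map Prod.fst).toFinset with hT
  have hTmem : ∀ i F, F ∈ T i ↔ (∃ w, (F, w) ∈ c) ∧ F.Nonempty ∧ F ⊆ blk p i := by
    intro i F
    simp only [hT, List.mem_toFinset, List.mem_map, List.mem_filter, decide_eq_true_eq, Prod.exists]
    constructor
    · rintro ⟨F', w, ⟨h1, h2⟩, rfl⟩
      exact ⟨⟨w, h1⟩, h2⟩
    · rintro ⟨⟨w, h1⟩, h2⟩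
      exact ⟨F, w, ⟨h1, h2⟩, rfl⟩
  have hTcard : ∀ i, (T i).card ≤ K i := by
    intro i
    refine (List.toFinset_card_le _).trans ?_
    rw [List.length_map, ← List.countP_eq_length_filter]
    exact hcnt i
  have hTcmp : ∀ i, ∀ F ∈ T i, ∀ F' ∈ T i, F = F' ∨ FLt F F' ∨ FLt F' F := by
    intro i F hF F' hF'
    obtain ⟨⟨w, hw⟩, _⟩ := (hTmem i F).mp hF
    obtain ⟨⟨w', hw'⟩, _⟩ := (hTmem i F').mp hF'
    rcases pairwise_cases pw hw hw' with h | h | h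
    · left
      exact congrArg Prod.fst h
    · exact Or.inr (Or.inl h)
    · exact Or.inr (Or.inr h)
  set rk : ℕ → Finset ℕ → ℕ := fun i F => ((T i).filter (fun F' => FLt F' F)).card with hrk
  have hrklt : ∀ i, ∀ F ∈ T i, rk i F < K i := by
    intro i F hF
    refine lt_of_lt_of_le (Finset.card_lt_card ?_) (hTcard i)
    refine (Finset.ssubset_iff_of_subset (Finset.filter_subset _ _)).mpr ⟨F, hF, ?_⟩
    intro h
    exact FLt.irr (Finset.mem_filter.mp h).2 ((hTmem i F).mp hF).2.1
  have hrkmono : ∀ i, ∀ F ∈ T i, ∀ F' ∈ T i, FLt F F' → rk i F < rk i F' := by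
    intro i F hF F' hF' hlt
    have hne := ((hTmem i F).mp hF).2.1
    apply Finset.card_lt_card
    refine (Finset.ssubset_iff_of_subset ?_).mpr ⟨F, Finset.mem_filter.mpr ⟨hF, hlt⟩, ?_⟩
    · intro F0 h0
      rw [Finset.mem_filter] at h0 ⊢
      exact ⟨h0.1, h0.2.trans' hlt hne⟩
    · intro h
      exact FLt.irr (Finset.mem_filter.mp h).2 hne
  set Fs : (i : ℕ) → Fin (K i) → Finset ℕ := fun i j =>
    ((T i).filter (fun F => rk i F = j)).biUnion id with hFs
  have hFssucc : ∀ i, FSucc (Fs i) := by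
    intro i j j' hjj x hx y hy
    simp only [hFs, Finset.mem_biUnion, Finset.mem_filter, id] at hx hy
    obtain ⟨F, ⟨hF, hFj⟩, hxF⟩ := hx
    obtain ⟨F', ⟨hF', hFj'⟩, hyF'⟩ := hy
    have hjj' : (j : ℕ) < j' := hjj
    rcases hTcmp i F hF F' hF' with h | h | h
    · subst h
      omega
    · exact h x hxF y hyF'
    · have := hrkmono i F' hF' F hF h
      omega
  choose Gi hGi hRi using fun i => hprof i (Fs i) (hFssucc i)
  have hFsrk : ∀ i F (hF : F ∈ T i), Fs i ⟨rk i F, hrklt i F hF⟩ = F := by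
    intro i F hF
    ext x
    simp only [hFs, Finset.mem_biUnion, Finset.mem_filter, id]
    constructor
    · rintro ⟨F', ⟨hF', hrkF'⟩, hx⟩
      rcases hTcmp i F hF F' hF' with h | h | h
      · rwa [h]
      · have := hrkmono i F hF F' hF' h
        omega
      · have := hrkmono i F' hF' F hF h
        omega
    · intro hx
      exact ⟨F, ⟨hF, rfl⟩, hx⟩
  set ib : Finset ℕ → ℕ := fun F => if h : ∃ i, F ⊆ blk p i then h.choose else 0 with hib
  have hibeq : ∀ F i, F.Nonempty → F ⊆ blk p i → ib F = i := by
    intro F i ⟨x, hx⟩ hFi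
    have hex : ∃ i, F ⊆ blk p i := ⟨i, hFi⟩
    simp only [hib, dif_pos hex]
    exact blk_eq hp (hex.choose_spec hx) (hFi hx)
  set G : Finset ℕ → Finset ℕ := fun F =>
    if h : F ∈ T (ib F) then Gi (ib F) ⟨rk (ib F) F, hrklt _ _ h⟩ ∩ blk p' (ib F) else ∅ with hG
  have hGT : ∀ i F (h : F ∈ T i), G F = Gi i ⟨rk i F, hrklt i F h⟩ ∩ blk p' i := by
    intro i F h
    have e : ib F = i := hibeq F i ((hTmem i F).mp h).2.1 ((hTmem i F).mp h).2.2
    subst e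
    simp only [hG, dif_pos h]
  have hG0 : G ∅ = ∅ := by
    simp only [hG]
    rw [dif_neg]
    intro h
    exact Finset.not_nonempty_empty ((hTmem _ _).mp h).2.1
  refine ⟨G, ?_, ?_⟩
  · intro k hk k' hk' hlt
    rcases k.1.eq_empty_or_nonempty with h0 | h0
    · rw [h0, hG0]
      intro x hx
      simp at hx
    rcases k'.1.eq_empty_or_nonempty with h0' | h0'
    · rw [h0', hG0]
      intro x _ y hy
      simp at hy
    obtain ⟨i, hi⟩ := hb k hk
    obtain ⟨i', hi'⟩ := hb k' hk'
    have hkT : k.1 ∈ T i := (hTmem i k.1).mpr ⟨⟨k.2, hk⟩, h0, hi⟩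
    have hkT' : k'.1 ∈ T i' := (hTmem i' k'.1).mpr ⟨⟨k'.2, hk'⟩, h0', hi'⟩
    rw [hGT i k.1 hkT, hGT i' k'.1 hkT']
    rcases lt_trichotomy i i' with h | h | h
    · exact (blk_lt hp' h).mono Finset.inter_subset_right Finset.inter_subset_right
    · subst h
      refine FLt.mono ?_ Finset.inter_subset_left Finset.inter_subset_left
      exact hGi i _ _ (hrkmono i _ hkT _ hkT' hlt)
    · exfalso
      obtain ⟨x, hx⟩ := h0
      obtain ⟨y, hy⟩ := h0'
      have h1 := hlt x hx y hy
      have h2 := blk_lt hp h y (hi' hy) x (hi hx)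
      omega
  · intro k hk i hne hki
    have hkT : k.1 ∈ T i := (hTmem i k.1).mpr ⟨⟨k.2, hk⟩, hne, hki⟩
    refine ⟨Gi i ⟨rk i k.1, hrklt i k.1 hkT⟩, ?_, hGT i k.1 hkT⟩
    have := hRi i ⟨rk i k.1, hrklt i k.1 hkT⟩
    rwa [hFsrk i k.1 hkT] at this

theorem AdmC.weight_le {N : c00 → ℝ} (hN : IsSchlumprechtNorm N) {C1 : ℝ} {c : Cfg}
    (h : AdmC N C1 c) (hnn : ∀ k ∈ c, 0 ≤ k.2) {k : Finset ℕ × ℝ} (hk : k ∈ c)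
    (hne : k.1.Nonempty) : k.2 ≤ C1 := by
  classical
  set x : c00 := Finsupp.single 0 1 with hx
  have hx0 : x ≠ 0 := by simp [hx]
  have hNx : 0 < N x := lt_of_le_of_ne (N_nonneg hN x) (fun h => hx0 ((hN.1.1 x).1 h.symm))
  have h1 := h x (fun F => if F = k.1 then {0} else ∅) ?_
  · have h2 : k.2 * N x ≤ (c.map fun k' => k'.2 * N (proj (if k'.1 = k.1 then {0} else ∅) x)).sum := by
      have h3 : k.2 * N x = k.2 * N (proj (if k.1 = k.1 then {0} else ∅) x) := by
        rw [if_pos rfl, proj_eq_self]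
        exact Finsupp.support_single_subset
      rw [h3]
      apply List.single_le_sum
      · intro t ht
        rw [List.mem_map] at ht
        obtain ⟨k', hk', rfl⟩ := ht
        exact mul_nonneg (hnn k' hk') (N_nonneg hN _)
      · exact List.mem_map.mpr ⟨k, hk, rfl⟩
    exact le_of_mul_le_mul_right (h2.trans h1) hNx
  · intro k1 _ k2 _ hlt
    split_ifs with e1 e2 e2
    · rw [e1, e2] at hlt
      exact absurd hne hlt.irr
    · intro a _ b hb
      simp at hb
    · intro a ha
      simp at ha
    · intro a ha
      simp at ha

theorem list_sum_count {α : Type*} (c : List α) (s : Finset ℕ) (P : ℕ → α → Bool) (t : ℕ → ℝ) :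
    (c.map fun k => ∑ i ∈ s, if P i k then t i else 0).sum = ∑ i ∈ s, (c.countP (P i) : ℝ) * t i := by
  induction c with
  | nil => simp
  | cons k c ih =>
    rw [List.map_cons, List.sum_cons, ih, ← Finset.sum_add_distrib]
    apply Finset.sum_congr rfl
    intro i _
    rw [List.countP_cons]
    split_ifs <;> push_cast <;> ring

theorem geom_sum_le3 (s : Finset ℕ) (t : ℝ) (h0 : 0 ≤ t) (h1 : t < 1) :
    ∑ i ∈ s, t ^ i ≤ (1 - t)⁻¹ := by
  rw [← tsum_geometric_of_lt_one h0 h1]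
  exact (summable_geometric_of_lt_one h0 h1).sum_le_tsum s (fun i _ => by positivity)

theorem Setup.transfer {N : c00 → ℝ} (hN : IsSchlumprechtNorm N) (S : Setup N) (v : ℕ → c00)
    (p' : ℕ → ℕ) (hp' : StrictMono p') (hsupp' : ∀ i, (v i).support ⊆ blk p' i)
    (hv : ∀ i, N (v i) = 1) (η : ℕ → ℝ) (hη : ∀ i, 0 ≤ η i)
    (hη' : ∀ i, ((2 * i * S.W i + 1 : ℕ) : ℝ) * η i ≤ (1 / 2 : ℝ) ^ i)
    (hprof : ∀ i (F : Fin (2 * i * S.W i + 1) → Finset ℕ), FSucc F →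
      ∃ G : Fin (2 * i * S.W i + 1) → Finset ℕ, FSucc G ∧
        ∀ k, N (proj (F k) (S.u i)) ≤ N (proj (G k) (v i)) + η i) :
    N (S.a.sum fun i t => t • S.u i) ≤ (15 * S.C1 + 6) * N (S.a.sum fun i t => t • v i) := by
  classical
  obtain ⟨E, c, hc, hbd⟩ := S.stage1 hN
  set Y := S.a.sum fun i t => t • v i with hY
  have hXe : S.a.sum (fun i t => t • S.u i) = S.X := rfl
  rw [hXe]
  have hYap : ∀ i k, k ∈ blk p' i → Y k = S.a i * v i k := by
    intro i k hk
    rw [hY, Finsupp.sum, Finsupp.finsetSum_apply, Finset.sum_eq_single i]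
    · rfl
    · intro j _ hj
      rw [Finsupp.smul_apply]
      have : v j k = 0 := by
        by_contra h
        exact hj (blk_eq hp' (hsupp' j (Finsupp.mem_support_iff.mpr h)) hk)
      rw [this, smul_zero]
    · intro h
      rw [Finsupp.notMem_support_iff.mp h]
      simp
  have hYproj : ∀ i (G : Finset ℕ), proj (G ∩ blk p' i) Y = S.a i • proj G (v i) := by
    intro i G
    ext k
    rw [Finsupp.smul_apply, proj_apply, proj_apply]
    simp only [Finset.mem_inter]
    by_cases h : k ∈ blk p' i
    · simp only [h, and_true]
      rw [hYap i k h]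
      split_ifs <;> simp
    · have : v i k = 0 := by
        by_contra h'
        exact h (hsupp' i (Finsupp.mem_support_iff.mpr h'))
      simp [h, this]
  have hXproj : ∀ i (F : Finset ℕ), F ⊆ blk S.p i → proj F S.X = S.a i • proj F (S.u i) := by
    intro i F hF
    ext k
    rw [Finsupp.smul_apply, proj_apply, proj_apply]
    split_ifs with h
    · rw [S.X_apply (hF h)]
      rfl
    · simp
  have hai : ∀ i, |S.a i| ≤ N Y := by
    intro i
    have h1 := hYproj i (v i).support
    rw [proj_eq_self (subset_refl _)] at h1
    have h2 := N_proj_le hN ((v i).support ∩ blk p' i) Y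
    rw [h1, N_smul hN, hv i, mul_one] at h2
    exact h2
  have hC1 := S.hC1
  have hY0 := N_nonneg hN Y
  have hcf : [c].flatten = c := by simp
  have hpw := hc.pw
  have hnn := hc.nonneg
  have hblk := hc.blk
  have hcnt := hc.cnt
  rw [hcf] at hpw hnn hblk hcnt
  have hadm := hc.adm c (by simp)
  obtain ⟨G, hG1, hG2⟩ := reembed S.hp hp' c hpw
    (fun k hk => by obtain ⟨i, _, hi⟩ := hblk k hk; exact ⟨i, hi⟩)
    (fun i => 2 * i * S.W i + 1) hcnt
    (fun i F G => N (proj F (S.u i)) ≤ N (proj G (v i)) + η i) hprof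
  have hval : S.val c ≤ 3 * S.C1 * N Y := by
    have e1 : S.val c ≤ (c.map fun k => k.2 * N (proj (G k.1) Y)).sum +
        (c.map fun k => ∑ i ∈ S.a.support,
          if decide (k.1.Nonempty ∧ k.1 ⊆ blk S.p i) then S.C1 * N Y * η i else 0).sum := by
      rw [← List.sum_map_add]
      apply List.sum_le_sum
      intro k hk
      rcases k.1.eq_empty_or_nonempty with h0 | hne
      · rw [h0, proj_empty, N_zero hN, mul_zero]
        apply add_nonneg
        · exact mul_nonneg (hnn k hk) (N_nonneg hN _)
        · simp
      · obtain ⟨i, hiA, hi⟩ := hblk k hk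
        obtain ⟨G0, hR, hGe⟩ := hG2 k hk i hne hi
        have hw := hadm.weight_le hN hnn hk hne
        have hw0 := hnn k hk
        have hs : S.C1 * N Y * η i ≤ ∑ i ∈ S.a.support,
            if decide (k.1.Nonempty ∧ k.1 ⊆ blk S.p i) then S.C1 * N Y * η i else 0 := by
          have h1 := Finset.single_le_sum (f := fun i =>
            if decide (k.1.Nonempty ∧ k.1 ⊆ blk S.p i) then S.C1 * N Y * η i else 0)
            (s := S.a.support) (fun j _ => by
              have := hη j
              split_ifs
              · positivity
              · exact le_rfl) hiA
          simpa [hne, hi] using h1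
        refine le_trans ?_ (add_le_add_right hs _)
        rw [hGe, hYproj, hXproj i k.1 hi, N_smul hN, N_smul hN]
        have h1 := hη i
        have h2 := abs_nonneg (S.a i)
        have h3 : k.2 * (|S.a i| * η i) ≤ S.C1 * (N Y * η i) := by
          apply mul_le_mul hw _ (by positivity) (by linarith)
          exact mul_le_mul_of_nonneg_right (hai i) h1
        calc k.2 * (|S.a i| * N (proj k.1 (S.u i)))
            ≤ k.2 * (|S.a i| * (N (proj G0 (v i)) + η i)) := by gcongr
          _ = k.2 * (|S.a i| * N (proj G0 (v i))) + k.2 * (|S.a i| * η i) := by ring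
          _ ≤ _ := by linarith
    have e2 := hadm Y G hG1
    rw [list_sum_count c S.a.support
      (fun i k => decide (k.1.Nonempty ∧ k.1 ⊆ blk S.p i)) (fun i => S.C1 * N Y * η i)] at e1
    have e3 : ∑ i ∈ S.a.support,
        (c.countP (fun k => decide (k.1.Nonempty ∧ k.1 ⊆ blk S.p i)) : ℝ) * (S.C1 * N Y * η i)
        ≤ S.C1 * N Y * 2 := by
      calc _ ≤ ∑ i ∈ S.a.support, S.C1 * N Y * (1 / 2 : ℝ) ^ i := by
            apply Finset.sum_le_sum
            intro i _
            have h1 : (c.countP (fun k => decide (k.1.Nonempty ∧ k.1 ⊆ blk S.p i)) : ℝ)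
              ≤ ((2 * i * S.W i + 1 : ℕ) : ℝ) := by exact_mod_cast hcnt i
            have h2 := mul_le_mul_of_nonneg_right h1 (hη i)
            have h3 := h2.trans (hη' i)
            have h4 : 0 ≤ S.C1 * N Y := by positivity
            have h5 := mul_le_mul_of_nonneg_left h3 h4
            linarith
        _ = S.C1 * N Y * ∑ i ∈ S.a.support, (1 / 2 : ℝ) ^ i := by rw [Finset.mul_sum]
        _ ≤ S.C1 * N Y * 2 := by
            have := geom_sum_le3 S.a.support (1 / 2) (by norm_num) (by norm_num)
            norm_num at this
            gcongr
    linarith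
  have hloss : ∑ i ∈ S.a.support, 2 * (|S.a i| * (2 / 3 : ℝ) ^ i) ≤ 6 * N Y := by
    calc _ ≤ ∑ i ∈ S.a.support, 2 * N Y * (2 / 3 : ℝ) ^ i := by
          apply Finset.sum_le_sum
          intro i _
          have := mul_le_mul_of_nonneg_right (hai i) (show (0 : ℝ) ≤ (2 / 3 : ℝ) ^ i by positivity)
          linarith
      _ = 2 * N Y * ∑ i ∈ S.a.support, (2 / 3 : ℝ) ^ i := by rw [Finset.mul_sum]
      _ ≤ 2 * N Y * 3 := by
          have := geom_sum_le3 S.a.support (2 / 3) (by norm_num) (by norm_num)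
          norm_num at this
          gcongr
      _ = _ := by ring
  linarith


/-! ### Part 8: choosing the subsequence -/

def TT (N : c00 → ℝ) (z : c00) (l : ℕ) (θ : ℝ) : Prop :=
  ∃ E : Fin l → Finset ℕ, FSucc E ∧ θ * flog l < ∑ s, N (proj (E s) z)

theorem TT_mono {N : c00 → ℝ} {z : c00} {l : ℕ} {θ θ' : ℝ} (h : θ' ≤ θ) (hT : TT N z l θ) :
    TT N z l θ' := by
  obtain ⟨E, hE, h1⟩ := hT
  exact ⟨E, hE, lt_of_le_of_lt (mul_le_mul_of_nonneg_right h (flog_nonneg l)) h1⟩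

theorem TT_bound {N : c00 → ℝ} (hN : IsSchlumprechtNorm N) (z : c00) {θ : ℝ} (hθ : 0 < θ) :
    ∃ t : ℕ, ∀ l, t ≤ l → ¬ TT N z l θ := by
  have h1 := (flog_tendsto.const_mul_atTop hθ).eventually_ge_atTop
    (∑ k ∈ z.support, N (proj {k} z))
  obtain ⟨t, ht⟩ := Filter.eventually_atTop.mp h1
  refine ⟨t, fun l hl => ?_⟩
  rintro ⟨E, hE, h2⟩
  have h3 := ht l hl
  have h4 := sum_N_le_l1 hN z E hE
  linarith

def Mtch (N : c00 → ℝ) (K : ℕ) (ε : ℝ) (z z' : c00) : Prop :=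
  ∀ F : Fin K → Finset ℕ, FSucc F → ∃ G : Fin K → Finset ℕ, FSucc G ∧
    ∀ k, N (proj (F k) z) ≤ N (proj (G k) z') + ε

theorem exists_color {α : Type*} [Finite α] (U : Ultrafilter ℕ) (g : ℕ → α) :
    ∃ c, ∀ᶠ n in (U : Filter ℕ), g n = c := by
  by_contra h
  push Not at h
  have h1 : ∀ c, ∀ᶠ n in (U : Filter ℕ), g n ≠ c := by
    intro c
    exact h c
  obtain ⟨n, hn⟩ := (Filter.eventually_all.mpr h1).exists
  exact hn (g n) rfl

theorem exists_match {N : c00 → ℝ} (hN : IsSchlumprechtNorm N) (U : Ultrafilter ℕ)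
    (x : ℕ → c00) (hx : ∀ n, N (x n) = 1) (K : ℕ) (R : ℕ) :
    ∃ A ∈ U, ∀ n ∈ A, ∀ n' ∈ A, Mtch N K (1 / ((R : ℝ) + 1)) (x n) (x n') := by
  classical
  have hR : (0 : ℝ) < (R : ℝ) + 1 := by positivity
  let fl : Finset ℕ → ℕ → Fin (R + 2) := fun F n =>
    ⟨⌊((R : ℝ) + 1) * N (proj F (x n))⌋₊, by
      have h1 : N (proj F (x n)) ≤ 1 := (N_proj_le hN F (x n)).trans_eq (hx n)
      have h2 : ((R : ℝ) + 1) * N (proj F (x n)) ≤ ((R + 1 : ℕ) : ℝ) := by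
        push_cast
        nlinarith
      have h3 := Nat.floor_le_floor h2
      rw [Nat.floor_natCast] at h3
      omega⟩
  obtain ⟨c, hc⟩ := exists_color U (fun n => {t : Fin K → Fin (R + 2) |
    ∃ F : Fin K → Finset ℕ, FSucc F ∧ ∀ k, t k = fl (F k) n})
  refine ⟨_, hc, ?_⟩
  intro n hn n' hn' F hF
  simp only [Set.mem_ofPred_eq] at hn hn'
  have h1 : (fun k => fl (F k) n) ∈ c := by
    rw [← hn]
    exact ⟨F, hF, fun k => rfl⟩
  rw [← hn'] at h1
  obtain ⟨G, hG, hG2⟩ := h1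
  refine ⟨G, hG, fun k => ?_⟩
  have h2 := congrArg Fin.val (hG2 k)
  simp only [fl] at h2
  have h3 := Nat.lt_floor_add_one (((R : ℝ) + 1) * N (proj (F k) (x n)))
  have h4 := Nat.floor_le (mul_nonneg hR.le (N_nonneg hN (proj (G k) (x n'))))
  rw [h2] at h3
  have h5 : ((R : ℝ) + 1) * N (proj (F k) (x n))
      ≤ ((R : ℝ) + 1) * (N (proj (G k) (x n')) + 1 / ((R : ℝ) + 1)) := by
    rw [mul_add, mul_one_div_cancel hR.ne']
    linarith
  exact le_of_mul_le_mul_left h5 hR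

theorem selection (U : Ultrafilter ℕ) (hU : (U : Filter ℕ) ≤ Filter.atTop)
    (D : ℕ → ℕ → Set ℕ) (hD : ∀ n M, D n M ∈ U) (t : ℕ → ℕ → ℕ) (base : ℕ → ℕ) :
    ∃ M φ : ℕ → ℕ, StrictMono M ∧ StrictMono φ ∧ (∀ n, t n (φ n) ≤ M (n + 1)) ∧
      (∀ n i, i ≤ n → φ n ∈ D i (M i)) ∧ ∀ n, base n ≤ M n := by
  classical
  have hpick : ∀ (A : Set ℕ) (k : ℕ), A ∈ U → ∃ m ∈ A, k < m := by
    intro A k hA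
    have h1 : ∀ᶠ m in (U : Filter ℕ), k < m := hU (Filter.eventually_gt_atTop k)
    have h2 : ∀ᶠ m in (U : Filter ℕ), m ∈ A := hA
    obtain ⟨m, hm⟩ := (h2.and h1).exists
    exact ⟨m, hm.1, hm.2⟩
  choose pk hpk1 hpk2 using hpick
  -- the state: M, phi, current set
  let St := ℕ × ℕ × {A : Set ℕ // A ∈ U}
  let step : ℕ → St → St := fun n s =>
    let M' := max (s.1 + 1) (max (t n s.2.1) (base (n + 1)))
    let A' : {A : Set ℕ // A ∈ U} :=
      ⟨s.2.2.1 ∩ D (n + 1) M', Filter.inter_mem s.2.2.2 (hD (n + 1) M')⟩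
    (M', pk A'.1 s.2.1 A'.2, A')
  let s0 : St := (base 0, pk (D 0 (base 0)) 0 (hD _ _), ⟨D 0 (base 0), hD _ _⟩)
  let s : ℕ → St := fun n => Nat.rec s0 step n
  have hs : ∀ n, s (n + 1) = step n (s n) := fun n => rfl
  have hmem : ∀ n, (s n).2.1 ∈ (s n).2.2.1 := by
    intro n
    cases n with
    | zero => exact hpk1 _ _ _
    | succ n => rw [hs]; exact hpk1 _ _ _
  have hDs : ∀ n i, i ≤ n → (s n).2.2.1 ⊆ D i (s i).1 := by
    intro n
    induction n with
    | zero =>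
      intro i hi
      obtain rfl : i = 0 := by omega
      exact subset_refl _
    | succ n ih =>
      intro i hi
      rcases Nat.lt_or_ge i (n + 1) with h | h
      · refine subset_trans ?_ (ih i (by omega))
        rw [hs]
        exact Set.inter_subset_left
      · obtain rfl : i = n + 1 := by omega
        rw [hs]
        exact Set.inter_subset_right
  refine ⟨fun n => (s n).1, fun n => (s n).2.1, ?_, ?_, ?_, ?_, ?_⟩
  · apply strictMono_nat_of_lt_succ
    intro n
    have : (s n).1 + 1 ≤ (s (n + 1)).1 := by rw [hs]; exact le_max_left _ _
    exact this
  · apply strictMono_nat_of_lt_succ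
    intro n
    rw [hs]
    exact hpk2 _ _ _
  · intro n
    simp only [hs]
    exact (le_max_left _ _).trans (le_max_right _ _)
  · intro n i hi
    exact hDs n i hi (hmem n)
  · intro n
    cases n with
    | zero => exact le_rfl
    | succ n =>
      simp only [hs]
      exact (le_max_right _ _).trans (le_max_right _ _)

/-- common vector facts: restriction of a sum to a block -/
theorem proj_blk_sum {u : ℕ → c00} {p : ℕ → ℕ} (hp : StrictMono p)
    (hsupp : ∀ i, (u i).support ⊆ blk p i) (a : ℕ →₀ ℝ) (i : ℕ) (E : Finset ℕ) :
    proj (E ∩ blk p i) (∑ i ∈ a.support, a i • u i) = a i • proj E (u i) := by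
  ext k
  rw [Finsupp.smul_apply, proj_apply, proj_apply]
  simp only [Finset.mem_inter]
  by_cases h : k ∈ blk p i
  · simp only [h, and_true]
    have : (∑ i ∈ a.support, a i • u i) k = a i * u i k := by
      rw [Finsupp.finsetSum_apply, Finset.sum_eq_single i]
      · rfl
      · intro j _ hj
        rw [Finsupp.smul_apply]
        have : u j k = 0 := by
          by_contra h'
          exact hj (blk_eq hp (hsupp j (Finsupp.mem_support_iff.mpr h')) h)
        rw [this, smul_zero]
      · intro h'
        rw [Finsupp.notMem_support_iff.mp h']
        simp
    rw [this]
    split_ifs <;> simp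
  · have : u i k = 0 := by
      by_contra h'
      exact h (hsupp i (Finsupp.mem_support_iff.mpr h'))
    simp [h, this]

def HH (N : c00 → ℝ) (C1 : ℝ) (u : ℕ → c00) (p M W : ℕ → ℕ) (a : ℕ →₀ ℝ) : Prop :=
  ∀ (l : ℕ) (J : Finset ℕ), (∀ i ∈ J, Jbad N u M l i) →
    ∃ (E : Finset ℕ) (c : Cfg), LGood N C1 p J E W [c] ∧
      ∑ i ∈ J, |a i| ≤ cval N (∑ i ∈ a.support, a i • u i) c

theorem HH_case1 {N : c00 → ℝ} (hN : IsSchlumprechtNorm N) {u : ℕ → c00} {p M W : ℕ → ℕ}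
    (hp : StrictMono p) (hsupp : ∀ i, (u i).support ⊆ blk p i) (hu : ∀ i, N (u i) = 1)
    (hW : ∀ i, 1 ≤ W i) (a : ℕ →₀ ℝ)
    (hone : ∀ l i i', Jbad N u M l i → Jbad N u M l i' → i = i') :
    HH N 1 u p M W a := by
  intro l J hJ
  rcases J.eq_empty_or_nonempty with rfl | ⟨i, hi⟩
  · exact ⟨∅, [], LGood.nilcfg hN le_rfl, by simp [cval]⟩
  · have : J = {i} := by
      ext i'
      rw [Finset.mem_singleton]
      constructor
      · intro h
        exact hone l i' i (hJ i' h) (hJ i hi)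
      · rintro rfl
        exact hi
    subst this
    refine ⟨(u i).support ∩ blk p i, [((u i).support ∩ blk p i, 1)],
      LGood.single hN le_rfl hp (InHull.of_subset (subset_refl _)) hi
        Finset.inter_subset_right (fun _ => hW i), ?_⟩
    rw [cval_single, proj_blk_sum hp hsupp, proj_eq_self (subset_refl _), N_smul hN, hu i]
    simp

theorem HH_case2 {N : c00 → ℝ} (hN : IsSchlumprechtNorm N) {u : ℕ → c00} {p M W : ℕ → ℕ}
    (hp : StrictMono p) (hsupp : ∀ i, (u i).support ⊆ blk p i) (a : ℕ →₀ ℝ)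
    {θ : ℝ} (hθ : 0 < θ) (ell : ℕ → ℕ) (hell : ∀ m, m + 2 ≤ ell m)
    (hW : ∀ m i, m ≤ i → ell m ≤ W i)
    (hT : ∀ m i, m ≤ i → TT N (u i) (ell m) θ)
    (hJ2 : ∀ l i i', Jbad N u M l i → Jbad N u M l i' → i' ≤ 2 * i + 1) :
    HH N (max 1 (2 / θ)) u p M W a := by
  classical
  intro l J hJ
  rcases J.eq_empty_or_nonempty with rfl | hne
  · exact ⟨∅, [], LGood.nilcfg hN (le_max_left _ _), by simp [cval]⟩
  set m := J.min' hne with hm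
  have hmJ : m ∈ J := J.min'_mem hne
  have hmle : ∀ i ∈ J, m ≤ i := fun i hi => J.min'_le i hi
  have hlen : J.card ≤ m + 2 := by
    have : J ⊆ Finset.Icc m (2 * m + 1) := by
      intro i hi
      rw [Finset.mem_Icc]
      exact ⟨hmle i hi, hJ2 l m i (hJ m hmJ) (hJ i hi)⟩
    have := Finset.card_le_card this
    rw [Nat.card_Icc] at this
    omega
  have hT' : ∀ i, ∃ E : Fin (ell m) → Finset ℕ, FSucc E ∧
      (m ≤ i → θ * flog (ell m) < ∑ s, N (proj (E s) (u i))) := by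
    intro i
    by_cases h : m ≤ i
    · obtain ⟨E, hE, hE2⟩ := hT m i h
      exact ⟨E, hE, fun _ => hE2⟩
    · refine ⟨fun _ => ∅, ?_, fun h' => absurd h' h⟩
      intro i j _ a ha
      simp at ha
  choose E hE hE2 using hT'
  have hl2 : 2 ≤ ell m := by have := hell m; omega
  have hf := flog_pos hl2
  set w : ℝ := 1 / (θ * flog (ell m)) with hw
  have hw0 : 0 < w := by positivity
  let row : ℕ → Cfg := fun i => List.ofFn fun s => (E i s ∩ blk p i, w)
  have hrow : ∀ i, ∀ k ∈ row i, ∃ s, k = (E i s ∩ blk p i, w) := by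
    intro i k hk
    obtain ⟨s, hs⟩ := (List.mem_ofFn' _ _).mp hk
    exact ⟨s, hs.symm⟩
  let L := J.sort (· ≤ ·)
  have hLmem : ∀ i, i ∈ L ↔ i ∈ J := fun i => Finset.mem_sort _
  have hLs : L.Pairwise (· < ·) := Finset.sortedLT_sort J |>.pairwise
  let c : Cfg := L.flatMap row
  have hcm : ∀ k ∈ c, ∃ i ∈ J, ∃ s, k = (E i s ∩ blk p i, w) := by
    intro k hk
    obtain ⟨i, hi, hk⟩ := List.mem_flatMap.mp hk
    exact ⟨i, (hLmem i).mp hi, hrow i k hk⟩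
  have hpw : c.Pairwise (fun k k' => FLt k.1 k'.1) := by
    rw [List.pairwise_flatMap]
    refine ⟨?_, ?_⟩
    · intro i _
      rw [List.pairwise_ofFn]
      intro s s' hss
      exact (hE i s s' hss).mono Finset.inter_subset_left Finset.inter_subset_left
    · refine hLs.imp ?_
      intro i i' hii k hk k' hk'
      obtain ⟨s, rfl⟩ := hrow i k hk
      obtain ⟨s', rfl⟩ := hrow i' k' hk'
      exact (blk_lt hp hii).mono Finset.inter_subset_right Finset.inter_subset_right
  have hclen : c.length ≤ ell m * ell m := by
    have h1 : c.length = J.card * ell m := by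
      simp only [c, L, row, List.length_flatMap, List.length_ofFn]
      simp
    rw [h1]
    have := hell m
    exact Nat.mul_le_mul_right _ (by omega)
  refine ⟨J.biUnion (fun i => blk p i), c, ?_, ?_⟩
  · constructor
    · intro c' hc' x G hG
      obtain rfl : c' = c := by simpa using hc'
      have h1 : (c.map fun k => k.2 * N (proj (G k.1) x))
          = ((c.map fun k => G k.1).map fun F => N (proj F x)).map (fun r => w * r) := by
        rw [List.map_map, List.map_map]
        apply List.map_congr_left
        intro k hk
        obtain ⟨i, _, s, rfl⟩ := hcm k hk
        rfl
      rw [h1, List.sum_map_mul_left, List.map_id']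
      have h2 := list_le_N hN x (ell m * ell m) (by nlinarith) (c.map fun k => G k.1)
        (by
          rw [List.pairwise_map]
          exact hpw.imp_of_mem (fun {k k'} hk hk' h => hG k hk k' hk' h))
        (by rw [List.length_map]; exact hclen)
      have h3 := flog_mul (ell m) (ell m)
      have hx0 := N_nonneg hN x
      calc _ ≤ w * (2 * flog (ell m) * N x) := by
            apply mul_le_mul_of_nonneg_left _ hw0.le
            refine h2.trans ?_
            apply mul_le_mul_of_nonneg_right _ hx0
            linarith
        _ = 2 / θ * N x := by
            rw [hw]
            field_simp
        _ ≤ _ := mul_le_mul_of_nonneg_right (le_max_right _ _) hx0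
    · simpa using hpw
    · intro k hk
      obtain ⟨i, _, s, rfl⟩ := hcm k (by simpa using hk)
      exact hw0.le
    · intro k hk
      obtain ⟨i, hi, s, rfl⟩ := hcm k (by simpa using hk)
      apply InHull.of_subset
      exact Finset.inter_subset_right.trans (Finset.subset_biUnion_of_mem (fun i => blk p i) hi)
    · intro k hk
      obtain ⟨i, hi, s, rfl⟩ := hcm k (by simpa using hk)
      exact ⟨i, hi, Finset.inter_subset_right⟩
    · intro i
      have hcf : [c].flatten = c := by simp
      rw [hcf]
      have hz : ∀ i', i' ≠ i → cnt p i (row i') = 0 := by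
        intro i' hi'
        unfold cnt
        rw [List.countP_eq_zero]
        intro k hk
        obtain ⟨s, rfl⟩ := hrow i' k hk
        simp only [decide_eq_true_eq]
        rintro ⟨⟨z, hz⟩, hsub⟩
        exact hi' (blk_eq hp (Finset.mem_inter.mp hz).2 (hsub hz))
      have hgen : ∀ L' : List ℕ, L'.Nodup → cnt p i (L'.flatMap row) ≤
          if i ∈ L' then ell m else 0 := by
        intro L'
        induction L' with
        | nil => intro _; simp [cnt]
        | cons i' L' ih =>
          intro hnd
          rw [List.nodup_cons] at hnd
          have h1 := ih hnd.2
          have h2 : cnt p i ((i' :: L').flatMap row) = cnt p i (row i') + cnt p i (L'.flatMap row) := by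
            unfold cnt
            rw [List.flatMap_cons, List.countP_append]
          rw [h2]
          by_cases h : i' = i
          · subst h
            rw [if_neg hnd.1] at h1
            have h3 : cnt p i' (row i') ≤ ell m := by
              unfold cnt
              refine List.countP_le_length.trans ?_
              simp [row]
            simp only [List.mem_cons, true_or, if_true]
            omega
          · rw [hz i' h]
            have : (i ∈ i' :: L') ↔ i ∈ L' := by
              rw [List.mem_cons]
              constructor
              · rintro (h' | h')
                · exact absurd h'.symm h
                · exact h'
              · exact Or.inr
            simp only [this]
            omega
      have h1 := hgen L (Finset.sort_nodup _ _)
      refine h1.trans ?_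
      split_ifs with h
      · exact hW m i (hmle i ((hLmem i).mp h))
      · exact Nat.zero_le _
  · have h1 : cval N (∑ i ∈ a.support, a i • u i) c
        = (L.map fun i => |a i| * (w * ∑ s, N (proj (E i s) (u i)))).sum := by
      unfold cval
      simp only [c]
      rw [List.map_flatMap, List.flatMap, List.sum_flatten, List.map_map]
      congr 1
      apply List.map_congr_left
      intro i _
      simp only [row, Function.comp_apply]
      rw [List.map_ofFn, List.sum_ofFn, Finset.mul_sum, Finset.mul_sum]
      apply Finset.sum_congr rfl
      intro s _
      simp only [Function.comp]
      rw [proj_blk_sum hp hsupp, N_smul hN]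
      ring
    have h2 : (L.map fun i => |a i| * (w * ∑ s, N (proj (E i s) (u i)))).sum
        = ∑ i ∈ J, |a i| * (w * ∑ s, N (proj (E i s) (u i))) := by
      rw [← List.sum_toFinset _ (Finset.sort_nodup _ _), Finset.sort_toFinset]
    rw [h1, h2]
    apply Finset.sum_le_sum
    intro i hi
    have h3 := hE2 i (hmle i hi)
    have h4 : 1 ≤ w * ∑ s, N (proj (E i s) (u i)) := by
      rw [hw, one_div, ← div_eq_inv_mul, le_div_iff₀ (by positivity)]
      linarith
    exact le_mul_of_one_le_right (abs_nonneg _) h4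


/-! ### Part 9: equivalence of the three sequences -/

def Wf (ell M : ℕ → ℕ) (i : ℕ) : ℕ := M i ^ 4 + ∑ m ∈ Finset.range (i + 1), ell m

noncomputable def etaf (W : ℕ → ℕ) (i : ℕ) : ℝ :=
  1 / (((2 ^ i * (2 * i * W i + 1) : ℕ) : ℝ) + 1)

theorem etaf_nonneg (W : ℕ → ℕ) (i : ℕ) : 0 ≤ etaf W i := by
  unfold etaf
  positivity

theorem etaf_le (W : ℕ → ℕ) (i : ℕ) :
    ((2 * i * W i + 1 : ℕ) : ℝ) * etaf W i ≤ (1 / 2 : ℝ) ^ i := by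
  unfold etaf
  set K : ℕ := 2 * i * W i + 1
  rw [mul_one_div, div_le_iff₀ (by positivity)]
  push_cast
  have h1 : (1 / 2 : ℝ) ^ i * (2 ^ i * (K : ℝ)) = K := by
    rw [← mul_assoc, ← mul_pow]
    norm_num
  rw [mul_add, h1]
  have : (0 : ℝ) ≤ (1 / 2 : ℝ) ^ i := by positivity
  linarith

theorem core {N : c00 → ℝ} (hN : IsSchlumprechtNorm N) (U : Ultrafilter ℕ)
    (hU : (U : Filter ℕ) ≤ Filter.atTop) (x : ℕ → c00) (hx : ∀ n, N (x n) = 1)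
    (ell : ℕ → ℕ) (D' : ℕ → ℕ → Set ℕ) (hD' : ∀ n M, D' n M ∈ U) (base' : ℕ → ℕ) :
    ∃ M φ : ℕ → ℕ, StrictMono M ∧ StrictMono φ ∧ (208 : ℝ) ^ 2 ≤ flog (M 0) ∧
      (∀ n l, M (n + 1) ≤ l → ¬ TT N (x (φ n)) l ((2 / 3 : ℝ) ^ n)) ∧
      (∀ i n n', i ≤ n → i ≤ n' → Mtch N (2 * i * Wf ell M i + 1) (etaf (Wf ell M) i)
        (x (φ n)) (x (φ n'))) ∧
      (∀ n i, i ≤ n → φ n ∈ D' i (M i)) ∧ ∀ n, base' n ≤ M n := by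
  classical
  let Wt : ℕ → ℕ → ℕ := fun i Mi => Mi ^ 4 + ∑ m ∈ Finset.range (i + 1), ell m
  have hm := fun i Mi => exists_match hN U x hx (2 * i * Wt i Mi + 1)
    (2 ^ i * (2 * i * Wt i Mi + 1))
  choose A hA hA2 using hm
  have ht : ∀ n k, ∃ t : ℕ, ∀ l, t ≤ l → ¬ TT N (x k) l ((2 / 3 : ℝ) ^ n) :=
    fun n k => TT_bound hN (x k) (by positivity)
  choose t ht using ht
  obtain ⟨b0, hb0⟩ := (flog_tendsto.eventually_ge_atTop ((208 : ℝ) ^ 2)).exists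
  obtain ⟨M, φ, hM, hφ, h1, h2, h3⟩ := selection U hU (fun n m => A n m ∩ D' n m)
    (fun n m => Filter.inter_mem (hA n m) (hD' n m)) t (fun n => max b0 (base' n))
  refine ⟨M, φ, hM, hφ, ?_, ?_, ?_, ?_, ?_⟩
  · exact hb0.trans (flog_nat_mono ((le_max_left _ _).trans (h3 0)))
  · intro n l hl
    exact ht n (φ n) l ((h1 n).trans hl)
  · intro i n n' hn hn'
    exact hA2 i (M i) _ (h2 n i hn).1 _ (h2 n' i hn').1
  · intro n i hi
    exact (h2 n i hi).2
  · intro n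
    exact (le_max_right _ _).trans (h3 n)

theorem exists_good {N : c00 → ℝ} (hN : IsSchlumprechtNorm N) (x : ℕ → c00)
    (hx : ∀ n, N (x n) = 1) :
    ∃ (φ M W : ℕ → ℕ) (C1 : ℝ), StrictMono φ ∧ 1 ≤ C1 ∧ StrictMono M ∧
      (208 : ℝ) ^ 2 ≤ flog (M 0) ∧ (∀ i, M i ^ 4 ≤ W i) ∧
      (∀ i n n', i ≤ n → i ≤ n' → Mtch N (2 * i * W i + 1) (etaf W i) (x (φ n)) (x (φ n'))) ∧
      ∀ α : ℕ → ℕ, StrictMono α → (∀ i, α i ≤ 2 * i + 1) → ∀ p, StrictMono p →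
        (∀ i, (x (φ (α i))).support ⊆ blk p i) → ∀ a,
        HH N C1 (fun i => x (φ (α i))) p M W a := by
  classical
  let U : Ultrafilter ℕ := Filter.hyperfilter ℕ
  have hU : (U : Filter ℕ) ≤ Filter.atTop := Nat.hyperfilter_le_atTop
  have hpow : ∀ i n, i ≤ n → (2 / 3 : ℝ) ^ n ≤ (2 / 3 : ℝ) ^ i := fun i n h =>
    pow_le_pow_of_le_one (by norm_num) (by norm_num) h
  by_cases hcase : ∃ θ : ℝ, 0 < θ ∧ ∃ᶠ l in Filter.atTop, ∀ᶠ n in (U : Filter ℕ), TT N (x n) l θ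
  · obtain ⟨θ, hθ, hfr⟩ := hcase
    have h1 : ∀ m, ∃ l, m + 2 ≤ l ∧ ∀ᶠ n in (U : Filter ℕ), TT N (x n) l θ := by
      intro m
      obtain ⟨l, hl, hl2⟩ := Filter.frequently_atTop.mp hfr (m + 2)
      exact ⟨l, hl, hl2⟩
    choose ell hell hell2 using h1
    obtain ⟨M, φ, hM, hφ, hM0, htail, hmt, hD, _⟩ := core hN U hU x hx ell
      (fun n _ => {k | TT N (x k) (ell n) θ}) (fun n _ => hell2 n) (fun _ => 0)
    refine ⟨φ, M, Wf ell M, max 1 (2 / θ), hφ, le_max_left _ _, hM, hM0,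
      fun i => Nat.le_add_right _ _, hmt, ?_⟩
    intro α hα hα2 p hp hsupp a
    apply HH_case2 hN hp hsupp a hθ ell hell
    · intro m i hmi
      refine le_trans ?_ (Nat.le_add_left _ _)
      exact Finset.single_le_sum (f := ell) (fun _ _ => Nat.zero_le _)
        (Finset.mem_range.mpr (by omega))
    · intro m i hmi
      exact hD (α i) m (hmi.trans (hα.le_apply))
    · intro l i i' hi hi'
      by_contra hcon
      have h2 : M (α i + 1) ≤ l := by
        refine le_trans (hM.monotone ?_) hi'.1
        have := hα2 i
        omega
      exact htail (α i) l h2 (TT_mono (hpow i (α i) hα.le_apply) hi.2)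
  · push Not at hcase
    have h1 : ∀ i : ℕ, ∃ m : ℕ, ∀ l, m ≤ l → ∀ᶠ n in (U : Filter ℕ),
        ¬ TT N (x n) l ((2 / 3 : ℝ) ^ i) := by
      intro i
      have h2 := hcase ((2 / 3 : ℝ) ^ i) (by positivity)
      obtain ⟨m, hm⟩ := Filter.eventually_atTop.mp h2
      refine ⟨m, fun l hl => ?_⟩
      have h3 := hm l hl
      exact h3
    choose m hm using h1
    obtain ⟨M, φ, hM, hφ, hM0, htail, hmt, hD, hb⟩ := core hN U hU x hx (fun _ => 0)
      (fun n Mn => {k | ∀ i ∈ Finset.range (n + 1), ∀ l ∈ Finset.Ico (m i) Mn,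
        ¬ TT N (x k) l ((2 / 3 : ℝ) ^ i)})
      (fun n Mn => by
        have : ∀ᶠ k in (U : Filter ℕ), ∀ i ∈ Finset.range (n + 1), ∀ l ∈ Finset.Ico (m i) Mn,
            ¬ TT N (x k) l ((2 / 3 : ℝ) ^ i) := by
          rw [Filter.eventually_all_finset]
          intro i _
          rw [Filter.eventually_all_finset]
          intro l hl
          exact hm i l (Finset.mem_Ico.mp hl).1
        exact this) m
    refine ⟨φ, M, Wf (fun _ => 0) M, 1, hφ, le_rfl, hM, hM0,
      fun i => Nat.le_add_right _ _, hmt, ?_⟩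
    intro α hα hα2 p hp hsupp a
    have hMpos : ∀ i, 1 ≤ M i := by
      intro i
      have h0 : 1 ≤ M 0 := by
        by_contra h
        have h' : M 0 = 0 := by omega
        rw [h'] at hM0
        unfold flog at hM0
        norm_num at hM0
      exact h0.trans (hM.monotone (Nat.zero_le i))
    apply HH_case1 hN hp hsupp (fun i => hx _)
    · intro i
      refine le_trans ?_ (Nat.le_add_right _ _)
      exact Nat.one_le_pow _ _ (hMpos i)
    · have key : ∀ l i, Jbad N (fun i => x (φ (α i))) M l i → M (α i) ≤ l ∧ l < M (α i + 1) := by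
        intro l i hi
        constructor
        · by_contra h
          push Not at h
          exact hD (α i) (α i) le_rfl i
            (Finset.mem_range.mpr (by have := hα.le_apply (x := i); omega)) l
            (Finset.mem_Ico.mpr ⟨(hb i).trans hi.1, h⟩) hi.2
        · by_contra h
          push Not at h
          exact htail (α i) l h (TT_mono (hpow i (α i) hα.le_apply) hi.2)
      intro l i i' hi hi'
      have k1 := key l i hi
      have k2 := key l i' hi'
      apply hα.injective
      have e1 : α i < α i' + 1 := hM.lt_iff_lt.mp (lt_of_le_of_lt k1.1 k2.2)
      have e2 : α i' < α i + 1 := hM.lt_iff_lt.mp (lt_of_le_of_lt k2.1 k1.2)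
      omega

theorem blockseq_lt {x : ℕ → c00} (hx : IsBlockSeq x) {m n : ℕ} (h : m < n) :
    ∀ i ∈ (x m).support, ∀ j ∈ (x n).support, i < j := by
  induction n, h using Nat.le_induction with
  | base => exact hx.2 m
  | succ n hmn ih =>
    intro i hi j hj
    obtain ⟨k, hk⟩ := Finsupp.support_nonempty_iff.mpr (hx.1 n)
    exact (ih i hi k hk).trans (hx.2 n k hk j hj)

theorem exists_p {x : ℕ → c00} (hx : IsBlockSeq x) {ψ : ℕ → ℕ} (hψ : StrictMono ψ) :
    ∃ p : ℕ → ℕ, StrictMono p ∧ ∀ i, (x (ψ i)).support ⊆ blk p i := by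
  have hne : ∀ i, (x (ψ i)).support.Nonempty := fun i =>
    Finsupp.support_nonempty_iff.mpr (hx.1 _)
  refine ⟨fun i => (x (ψ i)).support.min' (hne i), ?_, ?_⟩
  · apply strictMono_nat_of_lt_succ
    intro i
    exact blockseq_lt hx (hψ (Nat.lt_succ_self i)) _ (Finset.min'_mem _ _) _ (Finset.min'_mem _ _)
  · intro i k hk
    unfold blk
    rw [Finset.mem_Ico]
    exact ⟨Finset.min'_le _ _ hk,
      blockseq_lt hx (hψ (Nat.lt_succ_self i)) _ hk _ (Finset.min'_mem _ _)⟩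

theorem exists_subseq {N : c00 → ℝ} (hN : IsSchlumprechtNorm N) (x : ℕ → c00)
    (hb : IsBlockSeq x) (hx : ∀ n, N (x n) = 1) :
    ∃ φ : ℕ → ℕ, StrictMono φ ∧ ∃ C : ℝ, 1 ≤ C ∧
      ∀ α β : ℕ → ℕ, StrictMono α → StrictMono β → (∀ i, α i ≤ 2 * i + 1) → ∀ a : ℕ →₀ ℝ,
        N (a.sum fun i t => t • x (φ (α i))) ≤ C * N (a.sum fun i t => t • x (φ (β i))) := by
  obtain ⟨φ, M, W, C1, hφ, hC1, hM, hM0, hW, hmt, hH⟩ := exists_good hN x hx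
  refine ⟨φ, hφ, 15 * C1 + 6, by linarith, ?_⟩
  intro α β hα hβ hα2 a
  obtain ⟨p, hp, hps⟩ := exists_p hb (hφ.comp hα)
  obtain ⟨p', hp', hps'⟩ := exists_p hb (hφ.comp hβ)
  let S : Setup N :=
    { C1 := C1, hC1 := hC1, u := fun i => x (φ (α i)), p := p, hp := hp, hsupp := hps,
      hu := fun i => (hx _).le, M := M, W := W, hM := hM, hM0 := hM0, hW := hW, a := a,
      H3 := hH α hα hα2 p hp hps a }
  exact S.transfer hN (fun i => x (φ (β i))) p' hp' hps' (fun i => hx _) (etaf W)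
    (etaf_nonneg W) (etaf_le W) (fun i => hmt i (α i) (β i) hα.le_apply hβ.le_apply)

theorem SeqEquiv.of_le {N : c00 → ℝ} {u v : ℕ → c00} {C : ℝ} (hC : 1 ≤ C)
    (h1 : ∀ a : ℕ →₀ ℝ, N (a.sum fun i t => t • u i) ≤ C * N (a.sum fun i t => t • v i))
    (h2 : ∀ a : ℕ →₀ ℝ, N (a.sum fun i t => t • v i) ≤ C * N (a.sum fun i t => t • u i)) :
    SeqEquiv N u v := by
  refine ⟨C, hC, fun a => ⟨?_, h2 a⟩⟩
  rw [one_div, inv_mul_le_iff₀ (by linarith)]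
  exact h1 a


/-! ### Part 10: the isomorphism with the square -/

noncomputable def phiL (y : ℕ → c00) : (ℕ →₀ ℝ) →ₗ[ℝ] c00 := Finsupp.linearCombination ℝ y

theorem phiL_apply (y : ℕ → c00) (a : ℕ →₀ ℝ) : phiL y a = a.sum fun i t => t • y i :=
  Finsupp.linearCombination_apply ℝ a

theorem phiL_supp {y : ℕ → c00} {a : ℕ →₀ ℝ} {k : ℕ} (hk : k ∈ (phiL y a).support) :
    ∃ i, k ∈ (y i).support := by
  by_contra h
  push Not at h
  apply Finsupp.mem_support_iff.mp hk
  rw [phiL_apply, Finsupp.sum, Finsupp.finsetSum_apply]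
  apply Finset.sum_eq_zero
  intro i _
  rw [Finsupp.smul_apply, Finsupp.notMem_support_iff.mp (h i), smul_zero]

theorem N_add_ge {N : c00 → ℝ} (hN : IsSchlumprechtNorm N) {v w : c00}
    (h : Disjoint v.support w.support) : N v ≤ N (v + w) := by
  have h1 := N_proj_le hN v.support (v + w)
  rwa [proj_add, proj_eq_self (subset_refl _), proj_eq_zero h, add_zero] at h1

noncomputable def il : (ℕ →₀ ℝ) ≃ₗ[ℝ] (ℕ →₀ ℝ) × (ℕ →₀ ℝ) :=
  (Finsupp.domLCongr Equiv.natSumNatEquivNat.symm).trans (Finsupp.sumFinsuppLEquivProdFinsupp ℝ)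

theorem phiL_il (y : ℕ → c00) (q : (ℕ →₀ ℝ) × (ℕ →₀ ℝ)) :
    phiL y (il.symm q) = phiL (fun n => y (2 * n)) q.1 + phiL (fun n => y (2 * n + 1)) q.2 := by
  have h : (phiL y) ∘ₗ il.symm.toLinearMap =
      LinearMap.coprod (phiL (fun n => y (2 * n))) (phiL (fun n => y (2 * n + 1))) := by
    apply LinearMap.prod_ext
    · apply Finsupp.lhom_ext
      intro i t
      have : il.symm (Finsupp.single i t, 0) = Finsupp.single (2 * i) t := by
        rw [LinearEquiv.symm_apply_eq]
        ext k <;> simp [il, Finsupp.single_apply, Finsupp.domLCongr]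
      simp [this, phiL]
    · apply Finsupp.lhom_ext
      intro i t
      have : il.symm (0, Finsupp.single i t) = Finsupp.single (2 * i + 1) t := by
        rw [LinearEquiv.symm_apply_eq]
        ext k <;> simp [il, Finsupp.single_apply, Finsupp.domLCongr]
      simp [this, phiL]
  exact LinearMap.congr_fun h q

theorem final_iso {N : c00 → ℝ} (hN : IsSchlumprechtNorm N)
    {S : Type*} [NormedAddCommGroup S] [NormedSpace ℝ S] [CompleteSpace S]
    (j : c00 →ₗ[ℝ] S) (hjn : ∀ v : c00, ‖j v‖ = N v) (y : ℕ → c00)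
    (hdis : ∀ m n, m ≠ n → Disjoint (y m).support (y n).support) (C : ℝ) (hC : 1 ≤ C)
    (h1 : ∀ a, N (phiL y a) ≤ C * N (phiL (fun n => y (2 * n)) a))
    (h2 : ∀ a, N (phiL y a) ≤ C * N (phiL (fun n => y (2 * n + 1)) a))
    (h3 : ∀ a, N (phiL (fun n => y (2 * n)) a) ≤ C * N (phiL y a))
    (h4 : ∀ a, N (phiL (fun n => y (2 * n + 1)) a) ≤ C * N (phiL y a)) :
    Nonempty
        (↥((Submodule.span ℝ (Set.range fun n => j (y n))).topologicalClosure) ≃L[ℝ]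
          (↥((Submodule.span ℝ (Set.range fun n => j (y n))).topologicalClosure) ×
           ↥((Submodule.span ℝ (Set.range fun n => j (y n))).topologicalClosure))) := by
  set V := Submodule.span ℝ (Set.range fun n => j (y n)) with hV
  have : CompleteSpace V.topologicalClosure :=
    V.isClosed_topologicalClosure.completeSpace_coe
  have hjr : LinearMap.range (j ∘ₗ phiL y) = V := by
    rw [hV, ← Finsupp.range_linearCombination ℝ]
    congr 1
    apply Finsupp.lhom_ext
    intro i t
    simp [phiL]
  have hmemV : ∀ a, j (phiL y a) ∈ V := by
    intro a
    rw [← hjr]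
    exact ⟨a, rfl⟩
  let e1 : (ℕ →₀ ℝ) →ₗ[ℝ] V.topologicalClosure :=
    (j ∘ₗ phiL y).codRestrict V.topologicalClosure
      (fun a => V.le_topologicalClosure (hmemV a))
  have he1 : ∀ a, ‖e1 a‖ = N (phiL y a) := by
    intro a
    rw [← hjn]
    rfl
  have hd1 : DenseRange e1 := by
    rw [DenseRange, Subtype.dense_iff]
    intro s hs
    refine closure_mono ?_ hs
    intro z hz
    have hz' : z ∈ LinearMap.range (j ∘ₗ phiL y) := by
      rw [hjr]
      exact hz
    obtain ⟨a, rfl⟩ := hz'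
    exact ⟨e1 a, ⟨a, rfl⟩, rfl⟩
  let e2 : (ℕ →₀ ℝ) × (ℕ →₀ ℝ) →ₗ[ℝ] V.topologicalClosure × V.topologicalClosure :=
    e1.prodMap e1
  have hd2 : DenseRange e2 := hd1.prodMap hd1
  have he2 : ∀ q, ‖e2 q‖ = max (N (phiL y q.1)) (N (phiL y q.2)) := by
    intro q
    rw [← he1, ← he1]
    rfl
  have hds : ∀ a b, Disjoint (phiL (fun n => y (2 * n)) a).support
      (phiL (fun n => y (2 * n + 1)) b).support := by
    intro a b
    rw [Finset.disjoint_left]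
    intro k hk hk'
    obtain ⟨i, hi⟩ := phiL_supp hk
    obtain ⟨i', hi'⟩ := phiL_supp hk'
    exact Finset.disjoint_left.mp (hdis (2 * i) (2 * i' + 1) (by omega)) hi hi'
  refine ⟨il.extend e1 e2 hd1 ⟨C, ?_⟩ hd2 ⟨2 * C, ?_⟩⟩
  · intro a
    obtain ⟨q, rfl⟩ := il.symm.surjective a
    rw [LinearEquiv.apply_symm_apply, he2, he1, phiL_il]
    apply max_le
    · refine (h1 q.1).trans ?_
      exact mul_le_mul_of_nonneg_left (N_add_ge hN (hds q.1 q.2)) (by linarith)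
    · refine (h2 q.2).trans ?_
      rw [add_comm]
      exact mul_le_mul_of_nonneg_left (N_add_ge hN (hds q.1 q.2).symm) (by linarith)
  · intro q
    rw [he2, he1, phiL_il]
    have e3 := (N_add hN (phiL (fun n => y (2 * n)) q.1) (phiL (fun n => y (2 * n + 1)) q.2))
    have e4 := h3 q.1
    have e5 := h4 q.2
    have e6 : C * N (phiL y q.1) ≤ C * max (N (phiL y q.1)) (N (phiL y q.2)) :=
      mul_le_mul_of_nonneg_left (le_max_left _ _) (by linarith)
    have e7 : C * N (phiL y q.2) ≤ C * max (N (phiL y q.1)) (N (phiL y q.2)) :=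
      mul_le_mul_of_nonneg_left (le_max_right _ _) (by linarith)
    linarith


/-- Every normalized block sequence of the unit vector basis has a
subsequence `y` such that `(y_n)`, `(y_{2n})` and `(y_{2n+1})` are mutually
equivalent; consequently the closed linear span `Y` of `(y_n)` in `S` is
isomorphic to its square `Y × Y`. -/
theorem subsequence_equivalent_to_even_and_odd_parts
    (N : c00 → ℝ) (hN : IsSchlumprechtNorm N)
    (S : Type*) [NormedAddCommGroup S] [NormedSpace ℝ S] [CompleteSpace S]
    (j : c00 →ₗ[ℝ] S) (hj : DenseRange ⇑j) (hjn : ∀ v : c00, ‖j v‖ = N v)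
    (x : ℕ → c00) (hx : IsBlockSeq x) (hxn : ∀ n, N (x n) = 1) :
    ∃ φ : ℕ → ℕ, StrictMono φ ∧
      SeqEquiv N (fun n => x (φ n)) (fun n => x (φ (2 * n))) ∧
      SeqEquiv N (fun n => x (φ n)) (fun n => x (φ (2 * n + 1))) ∧
      SeqEquiv N (fun n => x (φ (2 * n))) (fun n => x (φ (2 * n + 1))) ∧
      Nonempty
        (↥((Submodule.span ℝ (Set.range fun n => j (x (φ n)))).topologicalClosure) ≃L[ℝ]
          (↥((Submodule.span ℝ (Set.range fun n => j (x (φ n)))).topologicalClosure) ×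
           ↥((Submodule.span ℝ (Set.range fun n => j (x (φ n)))).topologicalClosure))) := by
  obtain ⟨φ, hφ, C, hC, hle⟩ := exists_subseq hN x hx hxn
  have m0 : StrictMono (fun n : ℕ => n) := strictMono_id
  have m1 : StrictMono (fun n : ℕ => 2 * n) := fun a b h => by
    show 2 * a < 2 * b
    omega
  have m2 : StrictMono (fun n : ℕ => 2 * n + 1) := fun a b h => by
    show 2 * a + 1 < 2 * b + 1
    omega
  have l0 : ∀ i : ℕ, (fun n : ℕ => n) i ≤ 2 * i + 1 := fun i => by
    show i ≤ 2 * i + 1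
    omega
  have l1 : ∀ i : ℕ, (fun n : ℕ => 2 * n) i ≤ 2 * i + 1 := fun i => by
    show 2 * i ≤ 2 * i + 1
    omega
  have l2 : ∀ i : ℕ, (fun n : ℕ => 2 * n + 1) i ≤ 2 * i + 1 := fun i => le_rfl
  refine ⟨φ, hφ, SeqEquiv.of_le hC (hle _ _ m0 m1 l0) (hle _ _ m1 m0 l1),
    SeqEquiv.of_le hC (hle _ _ m0 m2 l0) (hle _ _ m2 m0 l2),
    SeqEquiv.of_le hC (hle _ _ m1 m2 l1) (hle _ _ m2 m1 l2), ?_⟩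
  refine final_iso hN j hjn (fun n => x (φ n)) ?_ C hC ?_ ?_ ?_ ?_
  · have key : ∀ m n, m < n → Disjoint (x (φ m)).support (x (φ n)).support := by
      intro m n h
      rw [Finset.disjoint_left]
      intro k hk hk'
      exact lt_irrefl k (blockseq_lt hx (hφ h) k hk k hk')
    intro m n hmn
    rcases lt_or_gt_of_ne hmn with h | h
    · exact key m n h
    · exact (key n m h).symm
  · intro a
    rw [phiL_apply, phiL_apply]
    exact hle _ _ m0 m1 l0 a
  · intro a
    rw [phiL_apply, phiL_apply]
    exact hle _ _ m0 m2 l0 a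
  · intro a
    rw [phiL_apply, phiL_apply]
    exact hle _ _ m1 m0 l1 a
  · intro a
    rw [phiL_apply, phiL_apply]
    exact hle _ _ m2 m0 l2 a
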